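/- arXiv:2408.06392 — 3 statements merged into one kernel-verified Lean document; each statement's English description precedes it below -/
import Mathlib

section
/- (Hanani–Tutte; van Kampen.) Let f be any map of K₅ to the plane, given by five points f₁, …, f₅ and, for each edge {i,j} of K₅, a polygonal line p_{ij} joining fᵢ to fⱼ. Then there exist two non-adjacent edges {a,b} and {c,d} of K₅ (i.e., {a,b} ∩ {c,d} = ∅) whose images intersect: the image of p_{ab} meets the image of p_{cd}. -/
/-- Sum of the oriented angles ∠A₁OA₂ + ∠A₂OA₃ + ⋯ + ∠A_{m−1}OA_m at `O`
along a polygonal line given as a list of points in the plane `ℂ`,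
where ∠AOB := Complex.arg ((B − O)/(A − O)) ∈ (−π, π]. -/
noncomputable def angSum (O : ℂ) : List ℂ → ℝ
  | a :: b :: rest => Complex.arg ((b - O) / (a - O)) + angSum O (b :: rest)
  | _ => 0

/-- `w'(A₁…A_m, O)`: the (non-closed) winding number of a polygonal line around `O`,
i.e. `(∠A₁OA₂ + ⋯ + ∠A_{m−1}OA_m) / (2π)`. -/
noncomputable def wp (O : ℂ) (l : List ℂ) : ℝ := angSum O l / (2 * Real.pi)

/-- `w(A₁…A_m, O)`: the winding number of the closed polygonal line `A₁…A_m` around `O`,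
i.e. `(∠A₁OA₂ + ⋯ + ∠A_{m−1}OA_m + ∠A_mOA₁) / (2π)`. -/
noncomputable def wcl (O : ℂ) (l : List ℂ) : ℝ := wp O (l ++ [l.headI])

/-- The image of a polygonal line: the union of the segments between consecutive points. -/
def imagePL : List ℂ → Set ℂ
  | [] => ∅
  | [a] => {a}
  | a :: b :: rest => segment ℝ a b ∪ imagePL (b :: rest)


lemma seg_beta (v z w : ℂ) (hz : 0 < (v * z).re) (hw : 0 < (v * w).re) :
    Complex.arg (z / w) = Complex.arg (v * z) - Complex.arg (v * w) := by
  have hv : v ≠ 0 := by rintro rfl; simp at hz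
  have hz0 : v * z ≠ 0 := by intro h; simp [h] at hz
  have hw0 : v * w ≠ 0 := by intro h; simp [h] at hw
  have e : z / w = (v * z) / (v * w) := by rw [mul_div_mul_left _ _ hv]
  have h1 := abs_lt.1 (Complex.abs_arg_lt_pi_div_two_iff.2 (Or.inl hz))
  have h2 := abs_lt.1 (Complex.abs_arg_lt_pi_div_two_iff.2 (Or.inl hw))
  have h3 : ((Complex.arg (z / w) : ℝ) : Real.Angle) =
      ((Complex.arg (v * z) - Complex.arg (v * w) : ℝ) : Real.Angle) := by
    rw [e, Complex.arg_div_coe_angle hz0 hw0, Real.Angle.coe_sub]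
  have h4 := congrArg Real.Angle.toReal h3
  rw [Real.Angle.toReal_coe_eq_self_iff.2 ⟨Complex.neg_pi_lt_arg _, Complex.arg_le_pi _⟩,
    Real.Angle.toReal_coe_eq_self_iff.2 ⟨by linarith, by linarith⟩] at h4
  exact h4

lemma seg_seg (A B C D : ℂ) (h : Disjoint (segment ℝ A B) (segment ℝ C D)) :
    Complex.arg ((B - C) / (A - C)) - Complex.arg ((B - D) / (A - D)) =
    Complex.arg ((D - A) / (C - A)) - Complex.arg ((D - B) / (C - B)) := by
  have comp : ∀ x y : ℂ, IsCompact (segment ℝ x y) := by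
    intro x y
    rw [segment_eq_image_lineMap]
    exact isCompact_Icc.image AffineMap.lineMap_continuous
  obtain ⟨g, u, v, hu, huv, hv⟩ := geometric_hahn_banach_compact_closed
    (convex_segment A B) (comp A B) (convex_segment C D) (comp C D).isClosed h
  have key : ∀ z : ℂ, ((⟨-g 1, g Complex.I⟩ : ℂ) * z).re = - g z := by
    intro z
    have : g z = z.re * g 1 + z.im * g Complex.I := by
      conv_lhs => rw [show z = z.re • (1 : ℂ) + z.im • Complex.I by
        simp [Complex.re_add_im]]
      rw [map_add, map_smul, map_smul]; simp
    rw [this]; simp; ring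
  have hA := hu A (left_mem_segment ℝ A B)
  have hB := hu B (right_mem_segment ℝ A B)
  have hC := hv C (left_mem_segment ℝ C D)
  have hD := hv D (right_mem_segment ℝ C D)
  have e1 : (D - A) / (C - A) = (A - D) / (A - C) := by
    rw [← neg_sub A D, ← neg_sub A C, neg_div_neg_eq]
  have e2 : (D - B) / (C - B) = (B - D) / (B - C) := by
    rw [← neg_sub B D, ← neg_sub B C, neg_div_neg_eq]
  have pAC := key (A - C)
  have pAD := key (A - D)
  have pBC := key (B - C)
  have pBD := key (B - D)
  rw [map_sub] at pAC pAD pBC pBD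
  rw [e1, e2, seg_beta _ (B - C) (A - C) (by rw [pBC]; linarith) (by rw [pAC]; linarith),
    seg_beta _ (B - D) (A - D) (by rw [pBD]; linarith) (by rw [pAD]; linarith),
    seg_beta _ (A - D) (A - C) (by rw [pAD]; linarith) (by rw [pAC]; linarith),
    seg_beta _ (B - D) (B - C) (by rw [pBD]; linarith) (by rw [pBC]; linarith)]
  ring

lemma head_mem_imagePL (a : ℂ) (l : List ℂ) : a ∈ imagePL (a :: l) := by
  cases l with
  | nil => simp [imagePL]
  | cons b r => exact Or.inl (left_mem_segment ℝ a b)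

lemma headI_mem_imagePL (l : List ℂ) (h : l ≠ []) : l.headI ∈ imagePL l := by
  cases l with
  | nil => exact absurd rfl h
  | cons b r => exact head_mem_imagePL b r

lemma last_mem_imagePL (l : List ℂ) (h : l ≠ []) : l.getLast h ∈ imagePL l := by
  induction l with
  | nil => exact absurd rfl h
  | cons a l ih =>
    cases l with
    | nil => simp [imagePL]
    | cons b r => exact Or.inr (by simpa using ih (by simp))

lemma seg_list (A B : ℂ) (q : List ℂ) (hq : q ≠ [])
    (h : Disjoint (segment ℝ A B) (imagePL q)) :
    Complex.arg ((B - q.headI) / (A - q.headI)) -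
      Complex.arg ((B - q.getLast hq) / (A - q.getLast hq)) = angSum A q - angSum B q := by
  induction q with
  | nil => exact absurd rfl hq
  | cons c l ih =>
    cases l with
    | nil => simp [angSum]
    | cons d r =>
      have h' : Disjoint (segment ℝ A B) (segment ℝ c d ∪ imagePL (d :: r)) := h
      rw [Set.disjoint_union_right] at h'
      have i1 := ih (by simp) h'.2
      have i2 := seg_seg A B c d h'.1
      simp only [angSum, List.headI_cons, List.getLast_cons_cons] at i1 ⊢
      linarith

lemma list_list (p q : List ℂ) (hp : p ≠ []) (hq : q ≠ [])
    (h : Disjoint (imagePL p) (imagePL q)) :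
    angSum q.headI p - angSum (q.getLast hq) p =
      angSum p.headI q - angSum (p.getLast hp) q := by
  induction p with
  | nil => exact absurd rfl hp
  | cons a l ih =>
    cases l with
    | nil => simp [angSum]
    | cons b r =>
      have h' : Disjoint (segment ℝ a b ∪ imagePL (b :: r)) (imagePL q) := h
      rw [Set.disjoint_union_left] at h'
      have i1 := ih (by simp) h'.2
      have i2 := seg_list a b q hq h'.1
      simp only [angSum, List.headI_cons, List.getLast_cons_cons] at i1 ⊢
      linarith

lemma angSum_coe (O : ℂ) (p : List ℂ) (hp : p ≠ []) (h : O ∉ imagePL p) :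
    (angSum O p : Real.Angle) =
      (Complex.arg (p.getLast hp - O) : Real.Angle) - (Complex.arg (p.headI - O) : Real.Angle) := by
  induction p with
  | nil => exact absurd rfl hp
  | cons a l ih =>
    cases l with
    | nil => simp [angSum]
    | cons b r =>
      have h' : O ∉ segment ℝ a b ∪ imagePL (b :: r) := h
      rw [Set.mem_union, not_or] at h'
      have i1 := ih (by simp) h'.2
      have ha : a - O ≠ 0 := fun e => h'.1 (by
        rw [← sub_eq_zero.1 e]; exact left_mem_segment ℝ _ _)
      have hb : b - O ≠ 0 := fun e => h'.1 (by
        rw [← sub_eq_zero.1 e]; exact right_mem_segment ℝ _ _)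
      simp only [angSum, List.headI_cons, List.getLast_cons_cons, Real.Angle.coe_add] at i1 ⊢
      rw [i1, Complex.arg_div_coe_angle hb ha]
      abel

/-- Lifted direction angle from `f i` to `f j`. -/
noncomputable def dirA (f : Fin 5 → ℂ) (i j : Fin 5) : ℝ :=
  if i < j then Complex.arg (f j - f i) else Complex.arg (f i - f j) + Real.pi

lemma dirA_coe (f : Fin 5 → ℂ) (i j : Fin 5) (h : f i ≠ f j) :
    (dirA f i j : Real.Angle) = (Complex.arg (f j - f i) : Real.Angle) := by
  unfold dirA
  split_ifs with hij
  · rfl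
  · rw [Real.Angle.coe_add, ← Complex.arg_neg_coe_angle (sub_ne_zero.2 h), neg_sub]

lemma dirA_swap (f : Fin 5 → ℂ) (i j : Fin 5) (h : i < j) :
    dirA f j i = dirA f i j + Real.pi := by
  simp [dirA, h, h.not_gt]

/-- Hanani–Tutte; van Kampen: Let `f` be any map of `K₅` to the plane,
given by five points `f 0, …, f 4` and, for each edge `{i,j}` of `K₅`, a polygonal line
`p i j` joining `f i` to `f j` (with `p j i` the reverse of `p i j`). Then there exist
two non-adjacent edges `{a,b}` and `{c,d}` of `K₅` (i.e. `{a,b} ∩ {c,d} = ∅`) whose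
images intersect. -/
theorem hanani_tutte_K5 (f : Fin 5 → ℂ) (p : Fin 5 → Fin 5 → List ℂ)
    (hne : ∀ i j, i ≠ j → p i j ≠ [])
    (hjoin : ∀ i j, ∀ h : i ≠ j,
      (p i j).headI = f i ∧ (p i j).getLast (hne i j h) = f j)
    (hsym : ∀ i j, p j i = (p i j).reverse) :
    ∃ a b c d : Fin 5, a ≠ b ∧ c ≠ d ∧ a ≠ c ∧ a ≠ d ∧ b ≠ c ∧ b ≠ d ∧
      (imagePL (p a b) ∩ imagePL (p c d)).Nonempty := by
  by_contra hcon
  have hd : ∀ a b c d : Fin 5, a ≠ b → c ≠ d → a ≠ c → a ≠ d → b ≠ c → b ≠ d →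
      Disjoint (imagePL (p a b)) (imagePL (p c d)) := by
    intro a b c d h1 h2 h3 h4 h5 h6
    rw [Set.disjoint_iff_inter_eq_empty, ← Set.not_nonempty_iff_eq_empty]
    exact fun h => hcon ⟨a, b, c, d, h1, h2, h3, h4, h5, h6, h⟩
  have hh : ∀ i j, i ≠ j → f i ∈ imagePL (p i j) := fun i j h => by
    have := headI_mem_imagePL _ (hne i j h)
    rwa [(hjoin i j h).1] at this
  have hout : ∀ i j k : Fin 5, i ≠ j → i ≠ k → j ≠ k → f i ∉ imagePL (p j k) := by
    intro i j k h1 h2 h3 hm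
    obtain ⟨l, l1, l2, l3⟩ : ∃ l : Fin 5, i ≠ l ∧ j ≠ l ∧ k ≠ l := by
      clear * -
      revert i j k; decide
    exact Set.disjoint_left.1 (hd j k i l h3 l1 h1.symm l2 h2.symm l3) hm (hh i l l1)
  have hinj : ∀ i j : Fin 5, i ≠ j → f i ≠ f j := by
    intro i j h e
    obtain ⟨l, l1, l2⟩ : ∃ l : Fin 5, i ≠ l ∧ j ≠ l := by
      clear * -
      revert i j; decide
    exact hout i j l h l1 l2 (e ▸ hh j l l2)
  have hn : ∀ i j k : Fin 5, ∃ n : ℤ, i ≠ j → i ≠ k → j ≠ k →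
      angSum (f i) (p j k) = dirA f i k - dirA f i j + 2 * Real.pi * n := by
    intro i j k
    by_cases h : i ≠ j ∧ i ≠ k ∧ j ≠ k
    · obtain ⟨h1, h2, h3⟩ := h
      have e := angSum_coe (f i) (p j k) (hne j k h3) (hout i j k h1 h2 h3)
      rw [(hjoin j k h3).1, (hjoin j k h3).2, ← dirA_coe f i k (hinj i k h2),
        ← dirA_coe f i j (hinj i j h1), ← Real.Angle.coe_sub,
        Real.Angle.angle_eq_iff_two_pi_dvd_sub] at e
      obtain ⟨n, e⟩ := e
      exact ⟨n, fun _ _ _ => by linarith⟩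
    · exact ⟨0, fun h1 h2 h3 => absurd ⟨h1, h2, h3⟩ h⟩
  choose n hn using hn
  have main : ∀ a b c d : Fin 5, a ≠ b → c ≠ d → a ≠ c → a ≠ d → b ≠ c → b ≠ d →
      (dirA f c b - dirA f c a) - (dirA f d b - dirA f d a) - (dirA f a d - dirA f a c)
       + (dirA f b d - dirA f b c) +
       2 * Real.pi * (n c a b - n d a b - n a c d + n b c d) = 0 := by
    intro a b c d h1 h2 h3 h4 h5 h6
    have e := list_list (p a b) (p c d) (hne a b h1) (hne c d h2) (hd a b c d h1 h2 h3 h4 h5 h6)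
    rw [(hjoin a b h1).1, (hjoin a b h1).2, (hjoin c d h2).1, (hjoin c d h2).2,
      hn c a b h3.symm h5.symm h1, hn d a b h4.symm h6.symm h1,
      hn a c d h3 h4 h2, hn b c d h5 h6 h2] at e
    linarith
  have tr : ∀ (z k : ℤ), 2 * Real.pi * (z : ℝ) = 2 * Real.pi * k → z = k := by
    intro z k h
    exact_mod_cast mul_left_cancel₀ (by positivity) h
  have caseD : ∀ a b c d : Fin 5, a < b → b < c → c < d →
      n c a b - n d a b - n a c d + n b c d = 0 := by
    intro a b c d h1 h2 h3
    have e := main a b c d h1.ne h3.ne (h1.trans h2).ne (h1.trans (h2.trans h3)).ne h2.ne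
      (h2.trans h3).ne
    rw [dirA_swap f b c h2, dirA_swap f a c (h1.trans h2), dirA_swap f b d (h2.trans h3),
      dirA_swap f a d (h1.trans (h2.trans h3))] at e
    apply tr; push_cast; linarith
  have caseN : ∀ a c d b : Fin 5, a < c → c < d → d < b →
      n c a b - n d a b - n a c d + n b c d = 0 := by
    intro a c d b h1 h2 h3
    have e := main a b c d (h1.trans (h2.trans h3)).ne h2.ne h1.ne (h1.trans h2).ne
      (h2.trans h3).ne' h3.ne'
    rw [dirA_swap f c b (h2.trans h3), dirA_swap f a c h1, dirA_swap f d b h3,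
      dirA_swap f a d (h1.trans h2)] at e
    apply tr; push_cast; linarith
  have caseI : ∀ a c b d : Fin 5, a < c → c < b → b < d →
      n c a b - n d a b - n a c d + n b c d = 1 := by
    intro a c b d h1 h2 h3
    have e := main a b c d (h1.trans h2).ne (h2.trans h3).ne h1.ne (h1.trans (h2.trans h3)).ne
      h2.ne' h3.ne
    rw [dirA_swap f c b h2, dirA_swap f a c h1, dirA_swap f b d h3,
      dirA_swap f a d (h1.trans (h2.trans h3))] at e
    apply tr; push_cast; linarith
  have e0 := caseD 0 1 2 3 (by decide) (by decide) (by decide)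
  have e1 := caseN 0 1 2 3 (by decide) (by decide) (by decide)
  have e2 := caseI 0 1 2 3 (by decide) (by decide) (by decide)
  have e3 := caseD 0 1 2 4 (by decide) (by decide) (by decide)
  have e4 := caseN 0 1 2 4 (by decide) (by decide) (by decide)
  have e5 := caseI 0 1 2 4 (by decide) (by decide) (by decide)
  have e6 := caseD 0 1 3 4 (by decide) (by decide) (by decide)
  have e7 := caseN 0 1 3 4 (by decide) (by decide) (by decide)
  have e8 := caseI 0 1 3 4 (by decide) (by decide) (by decide)
  have e9 := caseD 0 2 3 4 (by decide) (by decide) (by decide)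
  have e10 := caseN 0 2 3 4 (by decide) (by decide) (by decide)
  have e11 := caseI 0 2 3 4 (by decide) (by decide) (by decide)
  have e12 := caseD 1 2 3 4 (by decide) (by decide) (by decide)
  have e13 := caseN 1 2 3 4 (by decide) (by decide) (by decide)
  have e14 := caseI 1 2 3 4 (by decide) (by decide) (by decide)
  omega
end

section
/- (Garaev.) Let f be an almost embedding of K₅ − 45 (the complete graph on {1,…,5} with the edge {4,5} removed) in the plane. Then w_f(123, 4) − w_f(123, 5) = 1 or w_f(123, 4) − w_f(123, 5) = −1, where w_f(123, l) := w'(p₁₂, f_l) + w'(p₂₃, f_l) + w'(p₃₁, f_l). -/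
/-- Edges of `K₅ − 45`: all pairs of distinct vertices except `{4,5}`
(vertices `1,…,5` are encoded as `0,…,4 : Fin 5`, so the removed edge is `{3,4}`). -/
def IsEdgeK5m45 (i j : Fin 5) : Prop := i ≠ j ∧ ¬(i = 3 ∧ j = 4) ∧ ¬(i = 4 ∧ j = 3)


/-- `L` joins `a` to `b`. -/
def J (L : List ℂ) (a b : ℂ) : Prop := L.head? = some a ∧ L.getLast? = some b

lemma arg_div_half (x y : ℂ) (hx : 0 < x.re) (hy : 0 < y.re) :
    Complex.arg (x / y) = Complex.arg x - Complex.arg y := by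
  have hx0 : x ≠ 0 := by rintro rfl; simp at hx
  have hy0 : y ≠ 0 := by rintro rfl; simp at hy
  have h1 := Complex.abs_arg_lt_pi_div_two_iff.2 (Or.inl hx)
  have h2 := Complex.abs_arg_lt_pi_div_two_iff.2 (Or.inl hy)
  rw [abs_lt] at h1 h2
  have h : ((Complex.arg x - Complex.arg y : ℝ) : Real.Angle).toReal = Complex.arg x - Complex.arg y :=
    Real.Angle.toReal_coe_eq_self_iff.2 ⟨by linarith, by linarith⟩
  rw [← h, Real.Angle.coe_sub, ← Complex.arg_div_coe_angle hx0 hy0, Complex.arg_coe_angle_toReal_eq_arg]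

lemma seg_rect (a b c d : ℂ) (h : Disjoint (segment ℝ a b) (segment ℝ c d)) :
    Complex.arg ((b - c) / (a - c)) + Complex.arg ((d - b) / (c - b)) =
      Complex.arg ((d - a) / (c - a)) + Complex.arg ((b - d) / (a - d)) := by
  obtain ⟨f, u, v, hfu, huv, hfv⟩ := geometric_hahn_banach_compact_closed (convex_segment (𝕜 := ℝ) c d)
    (by rw [segment_eq_image_lineMap]; exact isCompact_Icc.image (AffineMap.lineMap_continuous))
    (convex_segment (𝕜 := ℝ) a b)
    (by rw [segment_eq_image_lineMap]; exact (isCompact_Icc.image (AffineMap.lineMap_continuous)).isClosed)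
    h.symm
  set w : ℂ := ⟨f 1, - f Complex.I⟩ with hw
  have hf : ∀ z : ℂ, f z = (w * z).re := by
    intro z
    have : z = z.re • (1:ℂ) + z.im • Complex.I := by
      apply Complex.ext <;> simp
    conv_lhs => rw [this]
    rw [map_add, map_smul, map_smul]
    simp [hw, Complex.mul_re]; ring
  have key : ∀ x ∈ segment ℝ a b, ∀ y ∈ segment ℝ c d, 0 < (w * (x - y)).re := by
    intro x hx y hy
    rw [← hf, map_sub]
    have := hfu y hy
    have := hfv x hx
    linarith
  have ha := left_mem_segment ℝ a b
  have hb := right_mem_segment ℝ a b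
  have hc := left_mem_segment ℝ c d
  have hd := right_mem_segment ℝ c d
  have w0 : w ≠ 0 := by
    intro h0
    have := key a ha c hc
    simp [h0] at this
  have e : ∀ x y : ℂ, x / y = (w * x) / (w * y) := by
    intro x y
    rw [mul_div_mul_left _ _ w0]
  have e2 : (d - b) / (c - b) = (b - d) / (b - c) := by
    rw [← neg_div_neg_eq]; simp
  have e3 : (d - a) / (c - a) = (a - d) / (a - c) := by
    rw [← neg_div_neg_eq]; simp
  rw [e2, e3, e (b - c), e (b - d) (b - c), e (a - d), e (b - d) (a - d),
    arg_div_half _ _ (key b hb c hc) (key a ha c hc),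
    arg_div_half _ _ (key b hb d hd) (key b hb c hc),
    arg_div_half _ _ (key a ha d hd) (key a ha c hc),
    arg_div_half _ _ (key b hb d hd) (key a ha d hd)]
  ring

lemma J_single {a b c : ℂ} : J [a] b c ↔ a = b ∧ a = c := by
  simp [J]

lemma J_cons {a b c d : ℂ} {r : List ℂ} : J (a :: b :: r) c d ↔ a = c ∧ J (b :: r) b d := by
  simp [J]

lemma J_ne {L : List ℂ} {a b : ℂ} (h : J L a b) : L ≠ [] := by
  rintro rfl; simp [J] at h

lemma J_exists {L : List ℂ} {a b : ℂ} (h : J L a b) : ∃ r, L = a :: r := by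
  cases L with
  | nil => simp [J] at h
  | cons x r => simp [J] at h; exact ⟨r, by rw [h.1]⟩

lemma im_head {L : List ℂ} {a b : ℂ} (h : J L a b) : a ∈ imagePL L := by
  obtain ⟨r, rfl⟩ := J_exists h
  cases r with
  | nil => simp [imagePL]
  | cons y r => exact Or.inl (left_mem_segment ℝ _ _)

lemma im_last {L : List ℂ} {a b : ℂ} (h : J L a b) : b ∈ imagePL L := by
  induction L generalizing a with
  | nil => simp [J] at h
  | cons x r ih =>
    cases r with
    | nil => rw [J_single] at h; simp [imagePL, h.2]
    | cons y r => rw [J_cons] at h; exact Or.inr (ih h.2)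

lemma rect1 {a b c d : ℂ} {Q : List ℂ} (hQ : J Q c d)
    (h : Disjoint (segment ℝ a b) (imagePL Q)) :
    Complex.arg ((b - c) / (a - c)) + angSum b Q =
      angSum a Q + Complex.arg ((b - d) / (a - d)) := by
  induction Q generalizing c with
  | nil => simp [J] at hQ
  | cons x r ih =>
    cases r with
    | nil =>
      rw [J_single] at hQ
      obtain ⟨rfl, rfl⟩ := hQ
      simp [angSum]
    | cons y r =>
      rw [J_cons] at hQ
      obtain ⟨rfl, hQ⟩ := hQ
      simp only [imagePL, Set.disjoint_union_right] at h
      have h1 := ih hQ h.2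
      have h2 := seg_rect _ _ _ _ h.1
      simp only [angSum]
      linarith

lemma rect {a b c d : ℂ} {P Q : List ℂ} (hP : J P a b) (hQ : J Q c d)
    (h : Disjoint (imagePL P) (imagePL Q)) :
    angSum c P + angSum b Q = angSum a Q + angSum d P := by
  induction P generalizing a with
  | nil => simp [J] at hP
  | cons x r ih =>
    cases r with
    | nil =>
      rw [J_single] at hP
      obtain ⟨rfl, rfl⟩ := hP
      simp [angSum]
    | cons y r =>
      rw [J_cons] at hP
      obtain ⟨rfl, hP⟩ := hP
      simp only [imagePL, Set.disjoint_union_left] at h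
      have h1 := ih hP h.2
      have h2 := rect1 hQ h.1
      simp only [angSum]
      linarith

lemma angSum_append {O a b : ℂ} {L Q : List ℂ} (h : J L a b) :
    angSum O (L ++ Q) = angSum O L + angSum O (b :: Q) := by
  induction L generalizing a with
  | nil => simp [J] at h
  | cons x r ih =>
    cases r with
    | nil =>
      rw [J_single] at h
      obtain ⟨rfl, rfl⟩ := h
      simp [angSum]
    | cons y r =>
      rw [J_cons] at h
      have := ih h.2
      simp only [List.cons_append, angSum] at this ⊢
      rw [this]; ring

lemma im_append {a b : ℂ} {L Q : List ℂ} (h : J L a b) :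
    imagePL (L ++ Q) = imagePL L ∪ imagePL (b :: Q) := by
  induction L generalizing a with
  | nil => simp [J] at h
  | cons x r ih =>
    cases r with
    | nil =>
      rw [J_single] at h
      obtain ⟨rfl, rfl⟩ := h
      have : x ∈ imagePL (x :: Q) := by
        cases Q with
        | nil => simp [imagePL]
        | cons y r => exact Or.inl (left_mem_segment ℝ _ _)
      simp [imagePL, this]
    | cons y r =>
      rw [J_cons] at h
      have := ih h.2
      simp only [List.cons_append, imagePL] at this ⊢
      rw [this, Set.union_assoc]

lemma J_append {a b c : ℂ} {L Q : List ℂ} (h : J L a b) (h2 : J (b :: Q) b c) :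
    J (L ++ Q) a c := by
  induction L generalizing a with
  | nil => simp [J] at h
  | cons x r ih =>
    cases r with
    | nil =>
      rw [J_single] at h
      obtain ⟨rfl, rfl⟩ := h
      simpa using h2
    | cons y r =>
      rw [J_cons] at h
      have := ih h.2
      simp only [List.cons_append] at this ⊢
      rw [J_cons]; exact ⟨h.1, this⟩

lemma J_reverse {a b : ℂ} {L : List ℂ} (h : J L a b) : J L.reverse b a := by
  simpa [J, and_comm] using h

lemma im_reverse (L : List ℂ) : imagePL L.reverse = imagePL L := by
  induction L with
  | nil => simp
  | cons x r ih =>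
    cases r with
    | nil => simp
    | cons y r =>
      have hJ : J (y :: r).reverse ((y :: r).getLast (by simp)) y := by
        apply J_reverse
        simp [J, List.getLast?_eq_getLast_of_ne_nil]
      rw [List.reverse_cons, im_append hJ, ih]
      simp only [imagePL]
      rw [Set.union_comm, segment_symm]
      congr 1
      apply Set.union_eq_self_of_subset_right
      simpa using left_mem_segment ℝ x y

lemma im_closed (L : List ℂ) : IsClosed (imagePL L) := by
  induction L with
  | nil => simp [imagePL]
  | cons x r ih =>
    cases r with
    | nil => simp [imagePL]
    | cons y r =>
      refine IsClosed.union ?_ ih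
      rw [segment_eq_image_lineMap]
      exact (isCompact_Icc.image (AffineMap.lineMap_continuous)).isClosed

lemma angSum_angle {z a b : ℂ} {L : List ℂ} (h : J L a b) (hz : z ∉ imagePL L) :
    ((angSum z L : ℝ) : Real.Angle) = (Complex.arg (b - z) : Real.Angle) - (Complex.arg (a - z) : Real.Angle) := by
  induction L generalizing a with
  | nil => simp [J] at h
  | cons x r ih =>
    cases r with
    | nil =>
      rw [J_single] at h
      obtain ⟨rfl, rfl⟩ := h
      simp [angSum]
    | cons y r =>
      rw [J_cons] at h
      obtain ⟨rfl, h⟩ := h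
      simp only [imagePL, Set.mem_union, not_or] at hz
      have hx : x - z ≠ 0 := fun h0 => hz.1 (by rw [← sub_eq_zero.1 h0]; exact left_mem_segment ℝ _ _)
      have hy : y - z ≠ 0 := fun h0 => hz.1 (by rw [← sub_eq_zero.1 h0]; exact right_mem_segment ℝ _ _)
      simp only [angSum]
      rw [Real.Angle.coe_add, ih h hz.2, Complex.arg_div_coe_angle hy hx]
      abel

/-- Simple polygonal lines. -/
def Good : List ℂ → Prop
  | a :: b :: r => (segment ℝ a b ∩ imagePL (b :: r) ⊆ {b}) ∧ a ≠ b ∧ Good (b :: r)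
  | _ => True

lemma tri_aux (w : ℂ) (h : 0 < w.im) : |Complex.arg (1 - w) - Complex.arg w| < Real.pi := by
  have hw0 : w ≠ 0 := by rintro rfl; simp at h
  have hw1 : w - 1 ≠ 0 := by
    intro h0
    have : w = 1 := sub_eq_zero.1 h0
    rw [this] at h; simp at h
  have h1 : Complex.arg (w - 1) = Complex.arg (1 - w) + Real.pi := by
    have := Complex.arg_neg_eq_arg_add_pi_of_im_neg (x := 1 - w) (by simpa using h)
    simpa using this
  have a1 : 0 < Complex.arg w := by
    rcases lt_or_eq_of_le (Complex.arg_nonneg_iff.2 h.le) with h2 | h2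
    · exact h2
    · have := (Complex.arg_eq_zero_iff.1 h2.symm).2; linarith
  have a2 : Complex.arg w < Real.pi := Complex.arg_lt_pi_iff.2 (Or.inr h.ne')
  have hi : 0 < (w - 1).im := by simpa using h
  have b2 : Complex.arg (w - 1) < Real.pi := Complex.arg_lt_pi_iff.2 (Or.inr hi.ne')
  have b1 : 0 ≤ Complex.arg (w - 1) := Complex.arg_nonneg_iff.2 hi.le
  have hq : 0 < ((w - 1) / w).im := by
    have : (w - 1) / w = 1 - w⁻¹ := by field_simp
    rw [this]
    simp only [Complex.sub_im, Complex.one_im, Complex.inv_im]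
    have : 0 < Complex.normSq w := Complex.normSq_pos.2 hw0
    have := div_pos h this
    rw [neg_div]; linarith
  have hd : Complex.arg ((w - 1) / w) = Complex.arg (w - 1) - Complex.arg w := by
    have h : ((Complex.arg (w - 1) - Complex.arg w : ℝ) : Real.Angle).toReal
        = Complex.arg (w - 1) - Complex.arg w :=
      Real.Angle.toReal_coe_eq_self_iff.2 ⟨by linarith, by linarith⟩
    rw [← h, Real.Angle.coe_sub, ← Complex.arg_div_coe_angle hw1 hw0, Complex.arg_coe_angle_toReal_eq_arg]
  have hp : 0 < Complex.arg ((w - 1) / w) := by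
    rcases lt_or_eq_of_le (Complex.arg_nonneg_iff.2 hq.le) with h2 | h2
    · exact h2
    · have := (Complex.arg_eq_zero_iff.1 h2.symm).2; linarith
  rw [abs_lt]
  constructor <;> linarith

lemma tri (w : ℂ) (h : w ∈ Complex.slitPlane) (h' : 1 - w ∈ Complex.slitPlane) :
    |Complex.arg (1 - w) - Complex.arg w| < Real.pi := by
  rcases lt_trichotomy w.im 0 with h1 | h1 | h1
  · have := tri_aux (1 - w) (by simpa using h1)
    rw [abs_sub_comm]
    simpa using this
  · have e1 : Complex.arg w = 0 := by
      rw [Complex.arg_eq_zero_iff]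
      rcases h with h | h
      · exact ⟨h.le, h1⟩
      · exact absurd h1 h
    have e2 : Complex.arg (1 - w) = 0 := by
      rw [Complex.arg_eq_zero_iff]
      have h1' : (1 - w).im = 0 := by simp [h1]
      rcases h' with h | h
      · exact ⟨h.le, h1'⟩
      · exact absurd h1' h
    rw [e1, e2]; simpa using Real.pi_pos
  · exact tri_aux w h1

/-- Two segments from `u` meeting only at `u`. -/
def Vee (u p r : ℂ) : Prop := u ≠ p ∧ u ≠ r ∧ segment ℝ u p ∩ segment ℝ u r ⊆ {u}

lemma Vee.symm {u p r : ℂ} (h : Vee u p r) : Vee u r p :=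
  ⟨h.2.1, h.1, by rw [Set.inter_comm]; exact h.2.2⟩

lemma Vee.ne {u p r : ℂ} (h : Vee u p r) : p ≠ r := by
  rintro rfl
  exact h.1 (h.2.2 ⟨right_mem_segment ℝ _ _, right_mem_segment ℝ _ _⟩).symm

lemma Vee.slit {u p r : ℂ} (h : Vee u p r) : (u - r) / (p - r) ∈ Complex.slitPlane := by
  by_contra hn
  rw [Complex.mem_slitPlane_iff] at hn
  push Not at hn
  obtain ⟨h1, h2⟩ := hn
  have hpr : p - r ≠ 0 := sub_ne_zero.2 h.ne
  set t : ℝ := -((u - r) / (p - r)).re with ht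
  have e : (u - r) / (p - r) = ((-t : ℝ) : ℂ) := by
    apply Complex.ext <;> simp [ht, h2]
  have e2 : u - r = ((-t : ℝ) : ℂ) * (p - r) := by
    rw [← e]; field_simp
  have ht0 : 0 ≤ t := by linarith
  have h1t : (1 + t) ≠ 0 := by positivity
  have hr : r ∈ segment ℝ u p := by
    refine ⟨1 / (1 + t), t / (1 + t), by positivity, by positivity, by field_simp, ?_⟩
    have h1t' : (1 + (t:ℂ)) ≠ 0 := by exact_mod_cast h1t
    simp only [Complex.real_smul]
    push_cast
    field_simp
    push_cast at e2
    linear_combination e2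
  exact h.2.1 (h.2.2 ⟨hr, right_mem_segment ℝ _ _⟩).symm

lemma arg_inv_slit {z : ℂ} (h : z ∈ Complex.slitPlane) : Complex.arg z⁻¹ = - Complex.arg z := by
  rw [Complex.arg_inv, if_neg]
  exact (Complex.mem_slitPlane_iff_arg.1 h).1

/-- The turning angle. -/
noncomputable def del (u p r : ℂ) : ℝ :=
  Complex.arg ((p - r) / (u - r)) - Complex.arg ((r - p) / (u - p))

lemma Vee.arg1 {u p r : ℂ} (h : Vee u p r) :
    Complex.arg ((u - r) / (p - r)) = - Complex.arg ((p - r) / (u - r)) := by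
  have := arg_inv_slit h.slit
  rw [inv_div] at this
  linarith

lemma Vee.del_lt {u p r : ℂ} (h : Vee u p r) : |del u p r| < Real.pi := by
  have h1 := h.arg1
  have h2 := h.symm.arg1
  have hpr : p - r ≠ 0 := sub_ne_zero.2 h.ne
  have hrp : r - p ≠ 0 := sub_ne_zero.2 h.ne.symm
  have e : (u - p) / (r - p) = 1 - (u - r) / (p - r) := by
    rw [← neg_sub p r] at *
    field_simp; ring
  have := tri _ h.slit (by rw [← e]; exact h.symm.slit)
  rw [← e, h1, h2] at this
  rw [del]
  convert this using 2
  ring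

lemma Vee.del_angle {u p r : ℂ} (h : Vee u p r) : ((del u p r : ℝ) : Real.Angle) =
    (Complex.arg (u - p) : Real.Angle) - (Complex.arg (u - r) : Real.Angle) - (Real.pi : Real.Angle) := by
  have hpr : p - r ≠ 0 := sub_ne_zero.2 h.ne
  have hrp : r - p ≠ 0 := sub_ne_zero.2 h.ne.symm
  have hup : u - p ≠ 0 := sub_ne_zero.2 h.1
  have hur : u - r ≠ 0 := sub_ne_zero.2 h.2.1
  have e : (Complex.arg (r - p) : Real.Angle) = (Complex.arg (p - r) : Real.Angle) + (Real.pi : Real.Angle) := by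
    rw [← neg_sub, Complex.arg_neg_coe_angle hpr]
  rw [del, Real.Angle.coe_sub, Complex.arg_div_coe_angle hpr hur, Complex.arg_div_coe_angle hrp hup, e]
  abel

lemma del_three {u p r c : ℂ} (h1 : Vee u p r) (h2 : Vee u p c) (h3 : Vee u r c) :
    |del u p r - del u p c + del u r c| ≤ Real.pi := by
  have a1 := abs_lt.1 h1.del_lt
  have a2 := abs_lt.1 h2.del_lt
  have a3 := abs_lt.1 h3.del_lt
  have e : ((del u p r - del u p c + del u r c : ℝ) : Real.Angle) = ((-Real.pi : ℝ) : Real.Angle) := by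
    rw [Real.Angle.coe_add, Real.Angle.coe_sub, h1.del_angle, h2.del_angle, h3.del_angle, Real.Angle.coe_neg]
    abel
  rw [Real.Angle.angle_eq_iff_two_pi_dvd_sub] at e
  obtain ⟨k, hk⟩ := e
  have hpi := Real.pi_pos
  have k1 : (k : ℝ) < 2 := by
    by_contra hh; push Not at hh; nlinarith
  have k2 : (-1 : ℝ) < k := by
    by_contra hh; push Not at hh; nlinarith
  have k1' : k < 2 := by exact_mod_cast k1
  have k2' : -1 < k := by exact_mod_cast k2
  rw [abs_le]
  have : k = 0 ∨ k = 1 := by omega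
  rcases this with rfl | rfl <;> push_cast at hk <;> constructor <;> linarith

lemma Good.not_mem {a b : ℂ} {r : List ℂ} (h : Good (a :: b :: r)) : a ∉ imagePL (b :: r) :=
  fun hm => h.2.1 (h.1 ⟨left_mem_segment ℝ _ _, hm⟩)

lemma Good.disj {a b c : ℂ} {r : List ℂ} (h : Good (a :: b :: c :: r)) :
    Disjoint (segment ℝ a b) (imagePL (c :: r)) := by
  rw [Set.disjoint_left]
  intro x hx hx2
  have : x = b := h.1 ⟨hx, Or.inr hx2⟩
  subst this
  exact h.2.2.not_mem hx2

lemma J_self_of {a b c : ℂ} {r : List ℂ} (h : J (a :: r) c b) : J (a :: r) a b := by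
  refine ⟨rfl, h.2⟩

lemma fork_base {u p2 r2 p r : ℂ} {P R : List ℂ} (hP : Good (u :: p2 :: P)) (hR : Good (u :: r2 :: R))
    (hi : imagePL (u :: p2 :: P) ∩ imagePL (u :: r2 :: R) ⊆ {u})
    (jP : J (u :: p2 :: P) u p) (jR : J (u :: r2 :: R) u r) :
    Vee u p2 r2 ∧ (angSum r (u :: p2 :: P) - angSum p (u :: r2 :: R)) -
      (angSum u (u :: p2 :: P) - angSum u (u :: r2 :: R)) = del u p2 r2 := by
  have jP' := (J_cons.1 jP).2
  have jR' := (J_cons.1 jR).2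
  have d1 : Disjoint (segment ℝ u p2) (imagePL (r2 :: R)) := by
    rw [Set.disjoint_left]
    intro x hx hx2
    have : x = u := hi ⟨Or.inl hx, Or.inr hx2⟩
    subst this
    exact hR.not_mem hx2
  have d2 : Disjoint (segment ℝ u r2) (imagePL (p2 :: P)) := by
    rw [Set.disjoint_left]
    intro x hx hx2
    have : x = u := hi ⟨Or.inr hx2, Or.inl hx⟩
    subst this
    exact hP.not_mem hx2
  have d3 : Disjoint (imagePL (p2 :: P)) (imagePL (r2 :: R)) := by
    rw [Set.disjoint_left]
    intro x hx hx2
    have : x = u := hi ⟨Or.inr hx, Or.inr hx2⟩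
    subst this
    exact hP.not_mem hx
  have e1 := rect1 jR' d1
  have e2 := rect1 jP' d2
  have e3 := rect jP' jR' d3
  refine ⟨⟨hP.2.1, hR.2.1, fun x hx => hi ⟨Or.inl hx.1, Or.inl hx.2⟩⟩, ?_⟩
  simp only [angSum, del, sub_self, div_zero, Complex.arg_zero]
  linarith

lemma fork_step {c c1 c2 p r : ℂ} {P R : List ℂ} (hP : Good (c :: c1 :: c2 :: P))
    (hR : Good (c :: c1 :: c2 :: R))
    (jP : J (c :: c1 :: c2 :: P) c p) (jR : J (c :: c1 :: c2 :: R) c r) :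
    (angSum r (c :: c1 :: c2 :: P) - angSum p (c :: c1 :: c2 :: R)) -
      (angSum c (c :: c1 :: c2 :: P) - angSum c (c :: c1 :: c2 :: R)) =
    (angSum r (c1 :: c2 :: P) - angSum p (c1 :: c2 :: R)) -
      (angSum c1 (c1 :: c2 :: P) - angSum c1 (c1 :: c2 :: R)) := by
  have jP' := (J_cons.1 (J_cons.1 jP).2).2
  have jR' := (J_cons.1 (J_cons.1 jR).2).2
  have e1 := rect1 jP' hP.disj
  have e2 := rect1 jR' hR.disj
  simp only [angSum, sub_self, div_zero, Complex.arg_zero] at *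
  linarith

lemma fork_mid {c u p2 r2 p r : ℂ} {P R : List ℂ} (hP : Good (c :: u :: p2 :: P))
    (hR : Good (c :: u :: r2 :: R))
    (hi : imagePL (u :: p2 :: P) ∩ imagePL (u :: r2 :: R) ⊆ {u})
    (jP : J (c :: u :: p2 :: P) c p) (jR : J (c :: u :: r2 :: R) c r) :
    |(angSum r (c :: u :: p2 :: P) - angSum p (c :: u :: r2 :: R)) -
      (angSum c (c :: u :: p2 :: P) - angSum c (c :: u :: r2 :: R))| ≤ Real.pi := by
  have jP' := (J_cons.1 (J_cons.1 jP).2).2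
  have jR' := (J_cons.1 (J_cons.1 jR).2).2
  have e1 := rect1 jP' hP.disj
  have e2 := rect1 jR' hR.disj
  obtain ⟨v1, e3⟩ := fork_base hP.2.2 hR.2.2 hi (J_cons.1 jP).2 (J_cons.1 jR).2
  have v2 : Vee u p2 c := ⟨hP.2.2.2.1, hP.2.1.symm, fun x hx => hP.1
    ⟨by rw [segment_symm]; exact hx.2, Or.inl hx.1⟩⟩
  have v3 : Vee u r2 c := ⟨hR.2.2.2.1, hR.2.1.symm, fun x hx => hR.1
    ⟨by rw [segment_symm]; exact hx.2, Or.inl hx.1⟩⟩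
  have := del_three v1 v2 v3
  have f1 := v2.symm.arg1
  have f2 := v3.symm.arg1
  convert this using 2
  rw [← e3, del, del]
  simp only [angSum, sub_self, div_zero, Complex.arg_zero] at *
  linarith

lemma fork {S P0 R0 : List ℂ} {u c p r : ℂ} (hP : Good (S ++ u :: P0)) (hR : Good (S ++ u :: R0))
    (hP0 : P0 ≠ []) (hR0 : R0 ≠ [])
    (hi : imagePL (u :: P0) ∩ imagePL (u :: R0) ⊆ {u})
    (jP : J (S ++ u :: P0) c p) (jR : J (S ++ u :: R0) c r) :
    |(angSum r (S ++ u :: P0) - angSum p (S ++ u :: R0)) -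
      (angSum c (S ++ u :: P0) - angSum c (S ++ u :: R0))| ≤ Real.pi ∧
    (S = [] → |(angSum r (S ++ u :: P0) - angSum p (S ++ u :: R0)) -
      (angSum c (S ++ u :: P0) - angSum c (S ++ u :: R0))| < Real.pi) := by
  obtain ⟨p2, P, rfl⟩ := List.exists_cons_of_ne_nil hP0
  obtain ⟨r2, R, rfl⟩ := List.exists_cons_of_ne_nil hR0
  induction S generalizing c with
  | nil =>
    simp only [List.nil_append] at *
    obtain ⟨rfl, -⟩ := J_cons.1 jP
    obtain ⟨v, e⟩ := fork_base hP hR hi jP jR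
    rw [e]
    exact ⟨v.del_lt.le, fun _ => v.del_lt⟩
  | cons x S ih =>
    refine ⟨?_, fun h => by simp at h⟩
    rcases S with _ | ⟨y, _ | ⟨z, S⟩⟩
    · simp only [List.nil_append, List.cons_append] at *
      obtain ⟨rfl, -⟩ := J_cons.1 jP
      exact fork_mid hP hR hi jP jR
    · simp only [List.nil_append, List.cons_append] at *
      obtain ⟨rfl, jP'⟩ := J_cons.1 jP
      have jR' := (J_cons.1 jR).2
      rw [fork_step hP hR jP jR]
      exact (ih hP.2.2 jP' hR.2.2 jR').1
    · simp only [List.nil_append, List.cons_append] at *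
      obtain ⟨rfl, jP'⟩ := J_cons.1 jP
      have jR' := (J_cons.1 jR).2
      rw [fork_step hP hR jP jR]
      exact (ih hP.2.2 jP' hR.2.2 jR').1

lemma seg_closed (a b : ℂ) : IsClosed (segment ℝ a b) := by
  rw [segment_eq_image_lineMap]
  exact (isCompact_Icc.image (AffineMap.lineMap_continuous)).isClosed

lemma seg_compact (a b : ℂ) : IsCompact (segment ℝ a b) := by
  rw [segment_eq_image_lineMap]
  exact (isCompact_Icc.image (AffineMap.lineMap_continuous))

lemma seg_sub {a b c d : ℂ} (h1 : a ∈ segment ℝ c d) (h2 : b ∈ segment ℝ c d) :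
    segment ℝ a b ⊆ segment ℝ c d := (convex_segment c d).segment_subset h1 h2

lemma seg_mid {v q u z : ℂ} (hu : u ∈ segment ℝ v q) (h1 : z ∈ segment ℝ v u)
    (h2 : z ∈ segment ℝ u q) : z = u := by
  have e1 := dist_add_dist_of_mem_segment hu
  have e2 := dist_add_dist_of_mem_segment h1
  have e3 := dist_add_dist_of_mem_segment h2
  have e4 := dist_triangle v z q
  rw [dist_comm u z] at e3
  have : dist z u ≤ 0 := by linarith
  exact dist_le_zero.1 this

lemma seg_anti {v q u : ℂ} (hu : u ∈ segment ℝ v q) (h1 : q ∈ segment ℝ v u) : u = q := by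
  have e1 := dist_add_dist_of_mem_segment hu
  have e2 := dist_add_dist_of_mem_segment h1
  rw [dist_comm q u] at e2
  have : dist u q ≤ 0 := by linarith
  exact dist_le_zero.1 this

lemma seg_split {v q u z : ℂ} (hu : u ∈ segment ℝ v q) (h1 : z ∈ segment ℝ v q) :
    z ∈ segment ℝ v u ∨ z ∈ segment ℝ u q := by
  rw [segment_eq_image'] at hu h1
  obtain ⟨s, ⟨hs0, hs1⟩, rfl⟩ := hu
  obtain ⟨t, ⟨ht0, ht1⟩, rfl⟩ := h1
  simp only
  rcases le_total t s with h | h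
  · left
    rw [segment_eq_image']
    rcases eq_or_lt_of_le hs0 with h0 | h0
    · subst h0
      have : t = 0 := le_antisymm h ht0
      exact ⟨0, by simp, by simp [this]⟩
    · refine ⟨t / s, ⟨by positivity, by rw [div_le_one h0]; exact h⟩, ?_⟩
      simp only [add_sub_cancel_left, smul_smul]
      rw [div_mul_cancel₀ _ h0.ne']
  · right
    rw [segment_symm, segment_eq_image']
    rcases eq_or_lt_of_le hs1 with h0 | h0
    · subst h0
      have : t = 1 := le_antisymm ht1 h
      exact ⟨0, by simp, by simp [this]⟩
    · have h0' : 0 < 1 - s := by linarith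
      refine ⟨(1 - t) / (1 - s), ⟨by apply div_nonneg <;> linarith, by rw [div_le_one h0']; linarith⟩, ?_⟩
      have h0c : (1 - (s : ℂ)) ≠ 0 := by
        have : ((1 - s : ℝ) : ℂ) ≠ 0 := by exact_mod_cast h0'.ne'
        simpa using this
      simp only [Complex.real_smul]
      push_cast
      field_simp
      ring

lemma first_hit {K : Set ℂ} (hK : IsClosed K) {a b : ℂ} (h : (K ∩ segment ℝ a b).Nonempty) :
    ∃ u ∈ K, u ∈ segment ℝ a b ∧ ∀ z ∈ segment ℝ a u, z ∈ K → z = u := by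
  obtain ⟨u, hu, hmin⟩ := ((seg_compact a b).inter_left hK).exists_isMinOn h
    (f := fun z => dist a z) (by fun_prop)
  refine ⟨u, hu.1, hu.2, fun z hz hzK => ?_⟩
  have h1 : dist a u ≤ dist a z :=
    hmin ⟨hzK, seg_sub (left_mem_segment ℝ _ _) hu.2 hz⟩
  have e2 := dist_add_dist_of_mem_segment hz
  have : dist z u ≤ 0 := by linarith
  exact dist_le_zero.1 this

lemma Good_append {L Q : List ℂ} {a q : ℂ} (jL : J L a q) (hL : Good L) (hQ : Good (q :: Q))
    (hi : imagePL L ∩ imagePL (q :: Q) ⊆ {q}) : Good (L ++ Q) := by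
  induction L generalizing a with
  | nil => simp [J] at jL
  | cons x r ih =>
    cases r with
    | nil =>
      rw [J_single] at jL
      obtain ⟨rfl, rfl⟩ := jL
      simpa using hQ
    | cons y r =>
      rw [J_cons] at jL
      have h1 := ih jL.2 hL.2.2 (fun z hz => hi ⟨Or.inr hz.1, hz.2⟩)
      have h2 := im_append (Q := Q) jL.2
      simp only [List.cons_append] at h1 h2 ⊢
      refine ⟨?_, hL.2.1, h1⟩
      rw [h2]
      rintro z ⟨hz, hz2 | hz2⟩
      · exact hL.1 ⟨hz, hz2⟩
      · have : z = q := hi ⟨Or.inl hz, hz2⟩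
        subst this
        exact hL.1 ⟨hz, im_last jL.2⟩

/-- A plane rooted tree. -/
structure Tr (c : ℂ) where
  V : Finset ℂ
  par : ℂ → ℂ
  rk : ℂ → ℕ
  hc : c ∈ V
  hpar : ∀ v ∈ V, v ≠ c → par v ∈ V
  hrk : ∀ v ∈ V, v ≠ c → rk (par v) < rk v
  disj : ∀ v ∈ V, v ≠ c → ∀ w ∈ V, w ≠ c → v ≠ w → ∀ z, z ∈ segment ℝ v (par v) → z ≠ par v →
    z ∈ segment ℝ w (par w) → z ≠ par w → False
  root : ∀ v ∈ V, v ≠ c → c ∈ segment ℝ v (par v) → c = par v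

namespace Tr

/-- The support. -/
def img {c : ℂ} (T : Tr c) : Set ℂ :=
  {z | z = c ∨ ∃ v ∈ T.V, v ≠ c ∧ z ∈ segment ℝ v (T.par v) ∧ z ≠ T.par v}

variable {c : ℂ} (T : Tr c)

lemma ne_par {v : ℂ} (hv : v ∈ T.V) (hc : v ≠ c) : v ≠ T.par v := by
  intro h
  have := T.hrk v hv hc
  rw [← h] at this
  omega

lemma V_img {v : ℂ} (hv : v ∈ T.V) : v ∈ T.img := by
  by_cases h : v = c
  · exact Or.inl h
  · exact Or.inr ⟨v, hv, h, left_mem_segment ℝ _ _, T.ne_par hv h⟩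

lemma seg_img {v : ℂ} (hv : v ∈ T.V) (hc : v ≠ c) : segment ℝ v (T.par v) ⊆ T.img := by
  intro z hz
  by_cases h : z = T.par v
  · rw [h]; exact T.V_img (T.hpar v hv hc)
  · exact Or.inr ⟨v, hv, hc, hz, h⟩

lemma img_closed : IsClosed T.img := by
  have : T.img = {c} ∪ ⋃ v ∈ T.V.erase c, segment ℝ v (T.par v) := by
    ext z
    constructor
    · rintro (h | ⟨v, hv, hc, hz, -⟩)
      · exact Or.inl h
      · right
        simp only [Set.mem_iUnion]
        exact ⟨v, by simp [hv, hc], hz⟩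
    · rintro (h | h)
      · exact Or.inl h
      · simp only [Set.mem_iUnion] at h
        obtain ⟨v, hv, hz⟩ := h
        rw [Finset.mem_erase] at hv
        exact T.seg_img hv.2 hv.1 hz
  rw [this]
  exact isClosed_singleton.union (isClosed_biUnion_finset fun v _ => seg_closed _ _)

lemma insert_pt {u : ℂ} (hu : u ∈ T.img) : ∃ T' : Tr c, T.V ⊆ T'.V ∧ u ∈ T'.V ∧ T'.img = T.img := by
  classical
  by_cases huV : u ∈ T.V
  · exact ⟨T, Finset.Subset.refl _, huV, rfl⟩
  rcases hu with rfl | ⟨v, hv, hvc, huv, hup⟩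
  · exact absurd T.hc huV
  have hne : u ≠ v := by rintro rfl; exact huV hv
  have huc : u ≠ c := by rintro rfl; exact huV T.hc
  have hpu : T.par v ≠ u := hup.symm
  have hrkv := T.hrk v hv hvc
  set par' : ℂ → ℂ := fun z => if z = u then T.par v else if z = v then u else T.par z with hpar'
  set rk' : ℂ → ℕ := fun z => if z = u then 2 * T.rk v - 1 else 2 * T.rk z with hrk'
  have pu : par' u = T.par v := by simp [hpar']
  have pv : par' v = u := by simp [hpar', hne.symm]
  have po : ∀ w, w ≠ u → w ≠ v → par' w = T.par w := by
    intro w h1 h2; simp [hpar', h1, h2]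
  have ru : rk' u = 2 * T.rk v - 1 := by simp [hrk']
  have ro : ∀ w, w ≠ u → rk' w = 2 * T.rk w := by
    intro w h1; simp [hrk', h1]
  -- new intervals sit in old ones
  have key : ∀ w ∈ insert u T.V, w ≠ c → ∃ w' ∈ T.V, w' ≠ c ∧ (w' = w ∨ (w = u ∧ w' = v)) ∧
      ∀ z, z ∈ segment ℝ w (par' w) → z ≠ par' w → z ∈ segment ℝ w' (T.par w') ∧ z ≠ T.par w' := by
    intro w hw hwc
    by_cases h1 : w = u
    · subst h1
      refine ⟨v, hv, hvc, Or.inr ⟨rfl, rfl⟩, fun z hz hzp => ?_⟩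
      rw [pu] at hz hzp
      exact ⟨seg_sub huv (right_mem_segment ℝ _ _) hz, hzp⟩
    · have hwV : w ∈ T.V := (Finset.mem_insert.1 hw).resolve_left h1
      by_cases h2 : w = v
      · subst h2
        refine ⟨w, hv, hvc, Or.inl rfl, fun z hz hzp => ?_⟩
        rw [pv] at hz hzp
        refine ⟨seg_sub (left_mem_segment ℝ _ _) huv hz, ?_⟩
        rintro rfl
        exact hup (seg_anti huv hz)
      · refine ⟨w, hwV, hwc, Or.inl rfl, fun z hz hzp => ?_⟩
        rw [po w h1 h2] at hz hzp
        exact ⟨hz, hzp⟩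
  have vu : ∀ z, z ∈ segment ℝ v u → z ≠ u → z ∈ segment ℝ u (T.par v) → z ≠ T.par v → False := by
    intro z h1 h2 h3 _
    exact h2 (seg_mid huv h1 h3)
  let T' : Tr c :=
    { V := insert u T.V
      par := par'
      rk := rk'
      hc := Finset.mem_insert_of_mem T.hc
      hpar := by
        intro w hw hwc
        by_cases h1 : w = u
        · subst h1; rw [pu]; exact Finset.mem_insert_of_mem (T.hpar v hv hvc)
        · have hwV : w ∈ T.V := (Finset.mem_insert.1 hw).resolve_left h1
          by_cases h2 : w = v
          · subst h2; rw [pv]; exact Finset.mem_insert_self _ _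
          · rw [po w h1 h2]; exact Finset.mem_insert_of_mem (T.hpar w hwV hwc)
      hrk := by
        intro w hw hwc
        by_cases h1 : w = u
        · subst h1; rw [pu, ru, ro _ hpu]; omega
        · have hwV : w ∈ T.V := (Finset.mem_insert.1 hw).resolve_left h1
          by_cases h2 : w = v
          · subst h2; rw [pv, ru, ro _ h1]; omega
          · have h3 : T.par w ≠ u := by
              intro h; exact huV (h ▸ T.hpar w hwV hwc)
            have := T.hrk w hwV hwc
            rw [po w h1 h2, ro _ h1, ro _ h3]; omega
      disj := by
        intro w1 hw1 hc1 w2 hw2 hc2 hne12 z z1 z1' z2 z2'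
        obtain ⟨y1, hy1, hyc1, hor1, hh1⟩ := key w1 hw1 hc1
        obtain ⟨y2, hy2, hyc2, hor2, hh2⟩ := key w2 hw2 hc2
        by_cases hy : y1 = y2
        · subst hy
          rcases hor1 with rfl | ⟨rfl, rfl⟩
          · rcases hor2 with rfl | ⟨rfl, rfl⟩
            · exact hne12 rfl
            · rw [pu] at z2 z2'; rw [pv] at z1 z1'
              exact vu z z1 z1' z2 z2'
          · rcases hor2 with rfl | ⟨rfl, _⟩
            · rw [pu] at z1 z1'; rw [pv] at z2 z2'
              exact vu z z2 z2' z1 z1'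
            · exact hne12 rfl
        · exact T.disj y1 hy1 hyc1 y2 hy2 hyc2 hy z (hh1 z z1 z1').1 (hh1 z z1 z1').2
            (hh2 z z2 z2').1 (hh2 z z2 z2').2
      root := by
        intro w hw hwc hcw
        by_contra hn
        obtain ⟨y, hy, hyc, -, hh⟩ := key w hw hwc
        exact (hh c hcw hn).2 (T.root y hy hyc (hh c hcw hn).1) }
  refine ⟨T', Finset.subset_insert _ _, Finset.mem_insert_self _ _, ?_⟩
  ext z
  constructor
  · rintro (h | ⟨w, hw, hwc, hz, hzp⟩)
    · exact Or.inl h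
    · obtain ⟨y, hy, hyc, -, hh⟩ := key w hw hwc
      exact Or.inr ⟨y, hy, hyc, hh z hz hzp⟩
  · rintro (h | ⟨w, hw, hwc, hz, hzp⟩)
    · exact Or.inl h
    · by_cases h2 : w = v
      · subst h2
        by_cases hzu : z = u
        · rw [hzu]; exact T'.V_img (Finset.mem_insert_self _ _)
        rcases seg_split huv hz with h | h
        · refine Or.inr ⟨w, Finset.mem_insert_of_mem hv, hwc, ?_, ?_⟩
          · change z ∈ segment ℝ w (par' w); rwa [pv]
          · change z ≠ par' w; rwa [pv]
        · refine Or.inr ⟨u, Finset.mem_insert_self _ _, huc, ?_, ?_⟩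
          · change z ∈ segment ℝ u (par' u); rwa [pu]
          · change z ≠ par' u; rwa [pu]
      · have h1 : w ≠ u := by rintro rfl; exact huV hw
        refine Or.inr ⟨w, Finset.mem_insert_of_mem hw, hwc, ?_, ?_⟩
        · change z ∈ segment ℝ w (par' w); rwa [po w h1 h2]
        · change z ≠ par' w; rwa [po w h1 h2]

lemma add_leaf {a u : ℂ} (hu : u ∈ T.V) (hau : ∀ z ∈ segment ℝ a u, z ∈ T.img → z = u)
    (hne : a ≠ u) : ∃ T' : Tr c, T.V ⊆ T'.V ∧ a ∈ T'.V ∧ T.img ⊆ T'.img ∧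
      T'.img ⊆ T.img ∪ segment ℝ a u := by
  classical
  have ha : a ∉ T.img := fun h => hne (hau a (left_mem_segment ℝ _ _) h)
  have haV : a ∉ T.V := fun h => ha (T.V_img h)
  have hac : a ≠ c := by rintro rfl; exact haV T.hc
  set par' : ℂ → ℂ := fun z => if z = a then u else T.par z with hpar'
  set rk' : ℂ → ℕ := fun z => if z = a then T.rk u + 1 else T.rk z with hrk'
  have pa : par' a = u := by simp [hpar']
  have po : ∀ w ∈ T.V, par' w = T.par w := by
    intro w hw
    have : w ≠ a := by rintro rfl; exact haV hw
    simp [hpar', this]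
  have ra : rk' a = T.rk u + 1 := by simp [hrk']
  have ro : ∀ w ∈ T.V, rk' w = T.rk w := by
    intro w hw
    have : w ≠ a := by rintro rfl; exact haV hw
    simp [hrk', this]
  let T' : Tr c :=
    { V := insert a T.V
      par := par'
      rk := rk'
      hc := Finset.mem_insert_of_mem T.hc
      hpar := by
        intro w hw hwc
        rcases Finset.mem_insert.1 hw with rfl | hwV
        · rw [pa]; exact Finset.mem_insert_of_mem hu
        · rw [po w hwV]; exact Finset.mem_insert_of_mem (T.hpar w hwV hwc)
      hrk := by
        intro w hw hwc
        rcases Finset.mem_insert.1 hw with rfl | hwV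
        · rw [pa, ra, ro u hu]; omega
        · rw [po w hwV, ro w hwV, ro _ (T.hpar w hwV hwc)]
          exact T.hrk w hwV hwc
      disj := by
        intro w1 hw1 hc1 w2 hw2 hc2 hne12 z z1 z1' z2 z2'
        rcases Finset.mem_insert.1 hw1 with rfl | hwV1
        · rcases Finset.mem_insert.1 hw2 with rfl | hwV2
          · exact hne12 rfl
          · rw [pa] at z1 z1'
            rw [po w2 hwV2] at z2 z2'
            exact z1' (hau z z1 (Or.inr ⟨w2, hwV2, hc2, z2, z2'⟩))
        · rw [po w1 hwV1] at z1 z1'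
          rcases Finset.mem_insert.1 hw2 with rfl | hwV2
          · rw [pa] at z2 z2'
            exact z2' (hau z z2 (Or.inr ⟨w1, hwV1, hc1, z1, z1'⟩))
          · rw [po w2 hwV2] at z2 z2'
            exact T.disj w1 hwV1 hc1 w2 hwV2 hc2 hne12 z z1 z1' z2 z2'
      root := by
        intro w hw hwc hcw
        rcases Finset.mem_insert.1 hw with rfl | hwV
        · rw [pa] at hcw ⊢
          exact hau c hcw (Or.inl rfl)
        · rw [po w hwV] at hcw ⊢
          exact T.root w hwV hwc hcw }
  refine ⟨T', Finset.subset_insert _ _, Finset.mem_insert_self _ _, ?_, ?_⟩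
  · rintro z (h | ⟨w, hw, hwc, hz, hzp⟩)
    · exact Or.inl h
    · refine Or.inr ⟨w, Finset.mem_insert_of_mem hw, hwc, ?_, ?_⟩
      · change z ∈ segment ℝ w (par' w); rwa [po w hw]
      · change z ≠ par' w; rwa [po w hw]
  · rintro z (h | ⟨w, hw, hwc, hz, hzp⟩)
    · exact Or.inl (Or.inl h)
    · change z ∈ segment ℝ w (par' w) at hz
      change z ≠ par' w at hzp
      rcases Finset.mem_insert.1 hw with rfl | hwV
      · rw [pa] at hz
        exact Or.inr hz
      · rw [po w hwV] at hz hzp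
        exact Or.inl (Or.inr ⟨w, hwV, hwc, hz, hzp⟩)

lemma attach {a b : ℂ} (hb : b ∈ T.img) : ∃ T' : Tr c, T.V ⊆ T'.V ∧ a ∈ T'.V ∧ T.img ⊆ T'.img ∧
      T'.img ⊆ T.img ∪ segment ℝ a b := by
  obtain ⟨u, huK, hus, hu⟩ := first_hit T.img_closed (a := a) (b := b) ⟨b, hb, right_mem_segment ℝ _ _⟩
  obtain ⟨T1, h1, h2, h3⟩ := T.insert_pt huK
  by_cases hau : a = u
  · subst hau
    exact ⟨T1, h1, h2, by rw [h3], by rw [h3]; exact Set.subset_union_left⟩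
  · obtain ⟨T2, k1, k2, k3, k4⟩ := T1.add_leaf h2 (a := a) (by rw [h3]; exact hu) hau
    rw [h3] at k3 k4
    refine ⟨T2, h1.trans k1, k2, k3, k4.trans ?_⟩
    exact Set.union_subset_union_right _ (seg_sub (left_mem_segment ℝ _ _) hus)

lemma attach_list {L : List ℂ} {a b : ℂ} (hL : J L a b) (hb : b ∈ T.img) :
    ∃ T' : Tr c, T.V ⊆ T'.V ∧ a ∈ T'.V ∧ T.img ⊆ T'.img ∧ T'.img ⊆ T.img ∪ imagePL L := by
  induction L generalizing a with
  | nil => simp [J] at hL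
  | cons x r ih =>
    cases r with
    | nil =>
      rw [J_single] at hL
      obtain ⟨rfl, rfl⟩ := hL
      obtain ⟨T1, h1, h2, h3⟩ := T.insert_pt hb
      exact ⟨T1, h1, h2, by rw [h3], by rw [h3]; exact Set.subset_union_left⟩
    | cons y r =>
      rw [J_cons] at hL
      obtain ⟨rfl, hL⟩ := hL
      obtain ⟨T1, h1, h2, h3, h4⟩ := ih hL
      obtain ⟨T2, k1, k2, k3, k4⟩ := T1.attach (a := x) (T1.V_img h2)
      refine ⟨T2, h1.trans k1, k2, h3.trans k3, k4.trans ?_⟩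
      rintro z (hz | hz)
      · rcases h4 hz with h | h
        · exact Or.inl h
        · exact Or.inr (Or.inr h)
      · exact Or.inr (Or.inl hz)

/-- Paths from the root. -/
inductive Path : ℂ → List ℂ → Prop
  | root : Path c [c]
  | step (v : ℂ) (L : List ℂ) : v ∈ T.V → v ≠ c → Path (T.par v) L → Path v (L ++ [v])

lemma Path.J {v : ℂ} {L : List ℂ} (h : T.Path v L) : J L c v := by
  induction h with
  | root => exact J_single.2 ⟨rfl, rfl⟩
  | step v L hv hc _ ih => exact J_append ih (J_cons.2 ⟨rfl, J_single.2 ⟨rfl, rfl⟩⟩)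

lemma exists_path {v : ℂ} (hv : v ∈ T.V) : ∃ L, T.Path v L := by
  induction h : T.rk v using Nat.strong_induction_on generalizing v with
  | _ n ih =>
    by_cases hc : v = c
    · subst hc; exact ⟨_, Path.root⟩
    · obtain ⟨L, hL⟩ := ih _ (h ▸ T.hrk v hv hc) (T.hpar v hv hc) rfl
      exact ⟨_, Path.step v L hv hc hL⟩

lemma Path.unique {v : ℂ} {P R : List ℂ} (h : T.Path v P) (h2 : T.Path v R) : P = R := by
  induction h generalizing R with
  | root =>
    cases h2 with
    | root => rfl
    | step v L hv hc _ => exact absurd rfl hc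
  | step v L hv hc _ ih =>
    cases h2 with
    | root => exact absurd rfl hc
    | step v L hv hc hh => rw [ih hh]

lemma Path.mem {v : ℂ} {L : List ℂ} (h : T.Path v L) : v ∈ T.V := by
  cases h with
  | root => exact T.hc
  | step v L hv hc _ => exact hv

lemma Path.im_step {v : ℂ} {L : List ℂ} (h : T.Path (T.par v) L) :
    imagePL (L ++ [v]) = imagePL L ∪ segment ℝ v (T.par v) := by
  rw [im_append h.J, segment_symm]
  simp only [imagePL]
  congr 1
  apply Set.union_eq_self_of_subset_right
  simpa using right_mem_segment ℝ _ _

lemma Path.im_sub {v : ℂ} {L : List ℂ} (h : T.Path v L) : imagePL L ⊆ T.img := by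
  induction h with
  | root => rintro z hz; exact Or.inl hz
  | step v L hv hc hh ih =>
    rw [hh.im_step]
    exact Set.union_subset ih (T.seg_img hv hc)

lemma Path.avoid {v w : ℂ} {R : List ℂ} (h : T.Path w R) (hv : v ∈ T.V) (hc : v ≠ c)
    (hr : T.rk w ≤ T.rk v) (hne : v ≠ w) {z : ℂ} (hz : z ∈ segment ℝ v (T.par v))
    (hzp : z ≠ T.par v) : z ∉ imagePL R := by
  induction h with
  | root =>
    intro h
    have : z = c := h
    subst this
    exact hzp (T.root v hv hc hz)
  | step w L hw hwc hh ih =>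
    have hr2 := T.hrk w hw hwc
    have h1 := ih (by omega) (by rintro rfl; omega)
    rw [hh.im_step]
    rintro (h | h)
    · exact h1 h
    · by_cases hz2 : z = T.par w
      · rw [hz2] at h1
        exact h1 (im_last hh.J)
      · exact T.disj v hv hc w hw hwc hne z hz hzp h hz2

lemma Path.good {v : ℂ} {L : List ℂ} (h : T.Path v L) : Good L := by
  induction h with
  | root => trivial
  | step v L hv hc hh ih =>
    have hn := T.ne_par hv hc
    refine Good_append hh.J ih ⟨?_, hn.symm, trivial⟩ ?_
    · rintro z ⟨_, hz⟩; exact hz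
    · rintro z ⟨hz1, hz2⟩
      by_contra hzp
      have hr := T.hrk v hv hc
      refine hh.avoid T hv hc hr.le hn (z := z) ?_ hzp hz1
      rcases hz2 with h | h
      · rwa [segment_symm]
      · have : z = v := h
        rw [this]; exact left_mem_segment ℝ _ _

lemma fork_aux (n : ℕ) : ∀ {v w : ℂ} {P R : List ℂ}, T.Path v P → T.Path w R →
    T.rk v + T.rk w = n →
    ∃ (S : List ℂ) (u : ℂ) (P0 R0 : List ℂ), P = S ++ u :: P0 ∧ R = S ++ u :: R0 ∧
      imagePL (u :: P0) ∩ imagePL (u :: R0) ⊆ {u} := by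
  induction n using Nat.strong_induction_on with
  | _ n ih =>
    have main : ∀ {v w : ℂ} {P R : List ℂ}, T.Path v P → T.Path w R →
        T.rk v + T.rk w = n → v ≠ w → T.rk w ≤ T.rk v →
        ∃ (S : List ℂ) (u : ℂ) (P0 R0 : List ℂ), P = S ++ u :: P0 ∧ R = S ++ u :: R0 ∧
          imagePL (u :: P0) ∩ imagePL (u :: R0) ⊆ {u} := by
      intro v w P R hP hR hn hne hr
      cases hP with
      | root =>
        obtain ⟨R0, rfl⟩ := J_exists hR.J
        exact ⟨[], c, [], R0, rfl, rfl, fun z hz => hz.1⟩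
      | step v L hv hc hh =>
        obtain ⟨S, u, P1, R0, hL, rfl, hi⟩ := ih (T.rk (T.par v) + T.rk w)
          (by have := T.hrk v hv hc; omega) hh hR rfl
        refine ⟨S, u, P1 ++ [v], R0, by rw [hL]; simp, rfl, ?_⟩
        have hJ : J (u :: P1) u (T.par v) := by
          have := hh.J.2
          rw [hL] at this
          refine ⟨rfl, ?_⟩
          rw [← this]; simp [List.getLast?_cons]
        have hR0 : imagePL (u :: R0) ⊆ imagePL (S ++ u :: R0) := by
          clear * -
          induction S with
          | nil => simp
          | cons x S ih =>
            refine ih.trans ?_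
            cases S with
            | nil => exact Set.subset_union_right
            | cons y S => exact Set.subset_union_right
        have e : imagePL (u :: (P1 ++ [v])) = imagePL (u :: P1) ∪ imagePL [T.par v, v] :=
          im_append hJ
        rw [e]
        rintro z ⟨hz1 | hz1, hz2⟩
        · exact hi ⟨hz1, hz2⟩
        · by_cases hzp : z = T.par v
          · rw [hzp] at hz2 ⊢
            exact hi ⟨im_last hJ, hz2⟩
          · exfalso
            refine hR.avoid T hv hc hr hne (z := z) ?_ hzp (hR0 hz2)
            rcases hz1 with h | h
            · rwa [segment_symm]
            · have : z = v := h
              rw [this]; exact left_mem_segment ℝ _ _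
    intro v w P R hP hR hn
    by_cases hne : v = w
    · subst hne
      have := hP.unique T hR
      subst this
      refine ⟨P.dropLast, v, [], [], ?_, ?_, fun z hz => hz.1⟩ <;>
      · have := hP.J.2
        rw [List.getLast?_eq_some_iff] at this
        obtain ⟨ys, rfl⟩ := this
        simp
    · rcases le_total (T.rk w) (T.rk v) with h | h
      · exact main hP hR hn hne h
      · obtain ⟨S, u, P0, R0, h1, h2, h3⟩ := main hR hP (by omega) (Ne.symm hne) h
        exact ⟨S, u, R0, P0, h2, h1, by rw [Set.inter_comm]; exact h3⟩

end Tr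

/-- The trivial tree. -/
def Tr.triv (c : ℂ) : Tr c where
  V := {c}
  par := id
  rk := fun _ => 0
  hc := by simp
  hpar := by intro v hv h; simp at hv; exact absurd hv h
  hrk := by intro v hv h; simp at hv; exact absurd hv h
  disj := by intro v hv h; simp at hv; exact absurd hv h
  root := by intro v hv h; simp at hv; exact absurd hv h

lemma Tr.triv_img (c : ℂ) : (Tr.triv c).img = {c} := by
  ext z
  constructor
  · rintro (h | ⟨v, hv, hc, _⟩)
    · exact h
    · exact absurd (by simpa [Tr.triv] using hv) hc
  · intro h; exact Or.inl h

/-- Simple subpath, reversed. -/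
lemma simple_rev {L : List ℂ} {a b : ℂ} (h : J L a b) :
    ∃ Q, J Q b a ∧ Good Q ∧ imagePL Q ⊆ imagePL L := by
  obtain ⟨T, h1, h2, h3, h4⟩ := (Tr.triv b).attach_list h (by rw [Tr.triv_img]; rfl)
  obtain ⟨Q, hQ⟩ := T.exists_path h2
  refine ⟨Q, hQ.J, hQ.good, hQ.im_sub.trans (h4.trans ?_)⟩
  rw [Tr.triv_img]
  rintro z (hz | hz)
  · have : z = b := hz
    rw [this]; exact im_last h
  · exact hz

lemma simple_sub {L : List ℂ} {a b : ℂ} (h : J L a b) :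
    ∃ Q, J Q a b ∧ Good Q ∧ imagePL Q ⊆ imagePL L := by
  obtain ⟨Q, h1, h2, h3⟩ := simple_rev (J_reverse h)
  exact ⟨Q, h1, h2, by rwa [im_reverse] at h3⟩

lemma whisker {L : List ℂ} {K K' : Set ℂ} {a b : ℂ} (hL : J L a b) (ha : a ∉ K) (hb : b ∈ K)
    (hK : IsClosed K) (hK' : IsClosed K') (hd : Disjoint K K') :
    ∃ (c x : ℂ) (π : List ℂ), J π a c ∧ imagePL π ⊆ imagePL L ∧ Disjoint (imagePL π) K ∧ x ∈ K ∧
      segment ℝ c x ⊆ imagePL L ∧ (∀ z ∈ segment ℝ c x, z ∈ K → z = x) ∧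
      Disjoint (segment ℝ c x) K' ∧ (∀ z ∈ segment ℝ c x, z ∈ imagePL π → z = c) := by
  induction L generalizing a K' with
  | nil => simp [J] at hL
  | cons y r ih =>
    cases r with
    | nil =>
      rw [J_single] at hL
      obtain ⟨rfl, rfl⟩ := hL
      exact absurd hb ha
    | cons y' r =>
      rw [J_cons] at hL
      obtain ⟨rfl, hL⟩ := hL
      by_cases hn : (K ∩ segment ℝ y y').Nonempty
      · obtain ⟨x, hxK, hxs, hx⟩ := first_hit hK hn
        have hsub : segment ℝ y x ⊆ segment ℝ y y' := seg_sub (left_mem_segment ℝ _ _) hxs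
        by_cases hn' : (K' ∩ segment ℝ x y).Nonempty
        · obtain ⟨w, hwK, hws, hw⟩ := first_hit hK' hn'
          have hxw : x ≠ w := by rintro rfl; exact Set.disjoint_left.1 hd hxK hwK
          set c := midpoint ℝ x w with hc
          have hcs : c ∈ segment ℝ x w := midpoint_mem_segment x w
          have hcx : c ≠ x := by
            intro h; rw [hc, midpoint_eq_left_iff] at h; exact hxw h
          have hcw : c ≠ w := by
            intro h; rw [hc, midpoint_eq_right_iff] at h; exact hxw h
          have hcy : c ∈ segment ℝ y x := by
            rw [segment_symm]; exact seg_sub (left_mem_segment ℝ _ _) hws hcs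
          have him : imagePL [y, c] = segment ℝ y c := by
            simp only [imagePL]
            apply Set.union_eq_self_of_subset_right
            simpa using right_mem_segment ℝ _ _
          have hyc : segment ℝ y c ⊆ segment ℝ y x := seg_sub (left_mem_segment ℝ _ _) hcy
          have hcx' : segment ℝ c x ⊆ segment ℝ y x := seg_sub hcy (right_mem_segment ℝ _ _)
          refine ⟨c, x, [y, c], J_cons.2 ⟨rfl, J_single.2 ⟨rfl, rfl⟩⟩, ?_, ?_, hxK, ?_, ?_, ?_, ?_⟩
          · rw [him]; exact fun z hz => Or.inl (hsub (hyc hz))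
          · rw [him, Set.disjoint_left]
            intro z hz hzK
            have : z = x := hx z (hyc hz) hzK
            subst this
            exact hcx (seg_anti hcy hz)
          · exact fun z hz => Or.inl (hsub (hcx' hz))
          · exact fun z hz hzK => hx z (hcx' hz) hzK
          · rw [Set.disjoint_left]
            intro z hz hzK
            rw [segment_symm] at hz
            have : z = w := hw z (seg_sub (left_mem_segment ℝ _ _) hcs hz) hzK
            subst this
            exact hcw (seg_anti hcs hz)
          · rw [him]
            exact fun z hz hz2 => seg_mid hcy hz2 hz
        · refine ⟨y, x, [y], J_single.2 ⟨rfl, rfl⟩, ?_, ?_, hxK, ?_, ?_, ?_, ?_⟩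
          · rintro z hz
            have : z = y := hz
            rw [this]; exact Or.inl (left_mem_segment ℝ _ _)
          · simpa [imagePL] using ha
          · exact fun z hz => Or.inl (hsub hz)
          · exact hx
          · rw [Set.disjoint_left]
            intro z hz hzK
            rw [segment_symm] at hz
            exact hn' ⟨z, hzK, hz⟩
          · exact fun z _ hz => hz
      · have hy' : y' ∉ K := fun h => hn ⟨y', h, right_mem_segment ℝ _ _⟩
        have hdis : Disjoint K (segment ℝ y y') := by
          rw [Set.disjoint_left]; exact fun z h1 h2 => hn ⟨z, h1, h2⟩
        obtain ⟨c, x, π, h1, h2, h3, h4, h5, h6, h7, h8⟩ :=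
          ih (K' := K' ∪ segment ℝ y y') hL hy' (hK'.union (seg_closed _ _))
            (by rw [Set.disjoint_union_right]; exact ⟨hd, hdis⟩)
        rw [Set.disjoint_union_right] at h7
        obtain ⟨r', rfl⟩ := J_exists h1
        refine ⟨c, x, y :: y' :: r', J_cons.2 ⟨rfl, h1⟩, ?_, ?_, h4, ?_, h6, h7.1, ?_⟩
        · exact Set.union_subset_union_right _ h2
        · exact Set.disjoint_union_left.2 ⟨hdis.symm, h3⟩
        · exact fun z hz => Or.inr (h5 hz)
        · rintro z hz (hz2 | hz2)
          · exact absurd hz2 (Set.disjoint_left.1 h7.2 hz)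
          · exact h8 z hz hz2

lemma suffix_pl {L : List ℂ} {a b x : ℂ} (hL : J L a b) (hx : x ∈ imagePL L) :
    ∃ Q, J Q x b ∧ imagePL Q ⊆ imagePL L := by
  induction L generalizing a with
  | nil => simp [J] at hL
  | cons y r ih =>
    cases r with
    | nil =>
      rw [J_single] at hL
      obtain ⟨rfl, rfl⟩ := hL
      have : x = y := hx
      subst this
      exact ⟨[x], J_single.2 ⟨rfl, rfl⟩, le_rfl⟩
    | cons y' r =>
      rw [J_cons] at hL
      rcases hx with hx | hx
      · exact ⟨x :: y' :: r, J_cons.2 ⟨rfl, hL.2⟩,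
          Set.union_subset_union_left _ (seg_sub hx (right_mem_segment ℝ _ _))⟩
      · obtain ⟨Q, h1, h2⟩ := ih hL.2 hx
        exact ⟨Q, h1, fun z hz => Or.inr (h2 hz)⟩

lemma first_hit_pl {L : List ℂ} {K : Set ℂ} (hK : IsClosed K) {a b : ℂ} (hL : J L a b) (hb : b ∈ K) :
    ∃ u ∈ K, ∃ Q, J Q a u ∧ imagePL Q ⊆ imagePL L ∧ ∀ z ∈ imagePL Q, z ∈ K → z = u := by
  induction L generalizing a with
  | nil => simp [J] at hL
  | cons y r ih =>
    cases r with
    | nil =>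
      rw [J_single] at hL
      obtain ⟨rfl, rfl⟩ := hL
      exact ⟨y, hb, [y], J_single.2 ⟨rfl, rfl⟩, le_rfl, fun z hz _ => hz⟩
    | cons y' r =>
      rw [J_cons] at hL
      obtain ⟨rfl, hL⟩ := hL
      by_cases hn : (K ∩ segment ℝ y y').Nonempty
      · obtain ⟨u, huK, hus, hu⟩ := first_hit hK hn
        have him : imagePL [y, u] = segment ℝ y u := by
          simp only [imagePL]
          apply Set.union_eq_self_of_subset_right
          simpa using right_mem_segment ℝ _ _
        refine ⟨u, huK, [y, u], J_cons.2 ⟨rfl, J_single.2 ⟨rfl, rfl⟩⟩, ?_, ?_⟩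
        · rw [him]; exact fun z hz => Or.inl (seg_sub (left_mem_segment ℝ _ _) hus hz)
        · rw [him]; exact hu
      · obtain ⟨u, huK, Q, h1, h2, h3⟩ := ih hL
        obtain ⟨r', rfl⟩ := J_exists h1
        refine ⟨u, huK, y :: y' :: r', J_cons.2 ⟨rfl, h1⟩, Set.union_subset_union_right _ h2, ?_⟩
        rintro z (hz | hz) hzK
        · exact absurd ⟨z, hzK, hz⟩ hn
        · exact h3 z hz hzK

lemma last_hit_pl {L : List ℂ} {K : Set ℂ} (hK : IsClosed K) {a b : ℂ} (hL : J L a b) (ha : a ∈ K) :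
    ∃ u ∈ K, ∃ Q, J Q u b ∧ Good Q ∧ imagePL Q ⊆ imagePL L ∧ ∀ z ∈ imagePL Q, z ∈ K → z = u := by
  obtain ⟨u, hu, Q, h1, h2, h3⟩ := first_hit_pl hK (J_reverse hL) ha
  rw [im_reverse] at h2
  obtain ⟨Q', k1, k2, k3⟩ := simple_rev h1
  exact ⟨u, hu, Q', k1, k2, k3.trans h2, fun z hz hzK => h3 z (k3 hz) hzK⟩

/-- The configuration: `A i` from `X` to `v i`, `B i` from `v i` to `Y`, `E i` opposite to `v i`. -/
structure Conf (X Y : ℂ) (v : Fin 3 → ℂ) (A B E : Fin 3 → List ℂ) : Prop where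
  jA : ∀ i, J (A i) X (v i)
  jB : ∀ i, J (B i) (v i) Y
  jE : ∀ i, J (E i) (v (i + 1)) (v (i + 2))
  dAB : ∀ i j, i ≠ j → Disjoint (imagePL (A i)) (imagePL (B j))
  dAE : ∀ i, Disjoint (imagePL (A i)) (imagePL (E i))
  dBE : ∀ i, Disjoint (imagePL (B i)) (imagePL (E i))
  XB : ∀ i, X ∉ imagePL (B i)
  YA : ∀ i, Y ∉ imagePL (A i)
  hXY : X ≠ Y

section
variable {X Y : ℂ} {v : Fin 3 → ℂ} {A B E : Fin 3 → List ℂ}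

lemma Conf.whisk (H : Conf X Y v A B E) (i : Fin 3) : ∃ (c : ℂ) (π s : List ℂ),
    J π X c ∧ imagePL π ⊆ imagePL (A i) ∧ (∀ j, Disjoint (imagePL π) (imagePL (B j))) ∧
    Good (c :: s) ∧ J (c :: s) c Y ∧ s ≠ [] ∧ imagePL (c :: s) ⊆ imagePL (A i) ∪ imagePL (B i) ∧
    (∀ j, j ≠ i → Disjoint (imagePL (c :: s)) (imagePL (A j))) ∧
    (∀ z ∈ imagePL (c :: s), z ∈ imagePL π → z = c) := by
  obtain ⟨c, x, π, h1, h2, h3, h4, h5, h6, h7, h8⟩ := whisker (K := imagePL (B i))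
    (K' := ⋃ j, ⋃ (_ : j ≠ i), imagePL (A j)) (H.jA i) (H.XB i) (im_head (H.jB i)) (im_closed _)
    (isClosed_iUnion_of_finite fun j => isClosed_iUnion_of_finite fun _ => im_closed _)
    (by
      simp only [Set.disjoint_iUnion_right]
      exact fun j hj => (H.dAB j i hj).symm)
  simp only [Set.disjoint_iUnion_right] at h7
  obtain ⟨Q0, q1, q2⟩ := suffix_pl (H.jB i) h4
  obtain ⟨Q, k1, k2, k3⟩ := simple_sub q1
  have k4 := k3.trans q2
  obtain ⟨r, rfl⟩ := J_exists k1
  have hcK : c ∉ imagePL (B i) := Set.disjoint_left.1 h3 (im_last h1)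
  refine ⟨c, π, x :: r, h1, h2, ?_, ⟨?_, ?_, k2⟩, J_cons.2 ⟨rfl, k1⟩, by simp, ?_, ?_, ?_⟩
  · intro j
    by_cases hj : j = i
    · rw [hj]; exact h3
    · exact (H.dAB i j (Ne.symm hj)).mono_left h2
  · exact fun z hz => h6 z hz.1 (k4 hz.2)
  · rintro rfl; exact hcK h4
  · rintro z (hz | hz)
    · exact Or.inl (h5 hz)
    · exact Or.inr (k4 hz)
  · intro j hj
    exact Set.disjoint_union_left.2 ⟨h7 j hj, (H.dAB j i hj).symm.mono_left k4⟩
  · rintro z (hz | hz) hzp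
    · exact h8 z hz hzp
    · exact absurd (k4 hz) (Set.disjoint_left.1 h3 hzp)

lemma tree_build (c : Fin 3 → ℂ) (π : Fin 3 → List ℂ) (hπ : ∀ i, J (π i) X (c i)) :
    ∃ T : Tr (c 0), (∀ i, c i ∈ T.V) ∧ X ∈ T.V ∧ ∀ z ∈ T.img, ∃ i, z ∈ imagePL (π i) := by
  obtain ⟨T1, a1, a2, a3, a4⟩ := (Tr.triv (c 0)).attach_list (hπ 0) (by rw [Tr.triv_img]; rfl)
  obtain ⟨T2, b1, b2, b3, b4⟩ := T1.attach_list (J_reverse (hπ 1)) (T1.V_img a2)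
  obtain ⟨T3, d1, d2, d3, d4⟩ := T2.attach_list (J_reverse (hπ 2)) (T2.V_img (b1 a2))
  rw [im_reverse] at b4 d4
  refine ⟨T3, ?_, d1 (b1 a2), ?_⟩
  · intro i
    fin_cases i
    · exact T3.hc
    · exact d1 b2
    · exact d2
  · intro z hz
    rcases d4 hz with hz | hz
    · rcases b4 hz with hz | hz
      · rcases a4 hz with hz | hz
        · rw [Tr.triv_img] at hz
          have : z = c 0 := hz
          exact ⟨0, this ▸ im_last (hπ 0)⟩
        · exact ⟨0, hz⟩
      · exact ⟨1, hz⟩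
    · exact ⟨2, hz⟩

lemma J_tail {S P0 : List ℂ} {u a b : ℂ} (h : J (S ++ u :: P0) a b) : J (u :: P0) u b := by
  refine ⟨rfl, ?_⟩
  rw [← h.2]; simp [List.getLast?_cons]

lemma im_tail {S P0 : List ℂ} {u : ℂ} : imagePL (u :: P0) ⊆ imagePL (S ++ u :: P0) := by
  induction S with
  | nil => simp
  | cons x S ih =>
    refine ih.trans ?_
    cases S with
    | nil => exact Set.subset_union_right
    | cons y S => exact Set.subset_union_right

lemma fork_apply {c0 c u y w : ℂ} (T : Tr c0) {Lc Lu s t : List ℂ}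
    (hc : T.Path c Lc) (hu : T.Path u Lu) (gs : Good (c :: s)) (gt : Good (u :: t))
    (js : J (c :: s) c y) (jt : J (u :: t) u w) (s0 : s ≠ []) (t0 : t ≠ [])
    (hs : ∀ z ∈ imagePL (c :: s), z ∈ T.img → z = c)
    (ht : ∀ z ∈ imagePL (u :: t), z ∈ T.img → z = u)
    (hd : Disjoint (imagePL (c :: s)) (imagePL (u :: t))) :
    |(angSum w (Lc ++ s) - angSum y (Lu ++ t)) - (angSum c0 (Lc ++ s) - angSum c0 (Lu ++ t))| ≤ Real.pi ∧
    (c = c0 → |(angSum w (Lc ++ s) - angSum y (Lu ++ t)) -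
      (angSum c0 (Lc ++ s) - angSum c0 (Lu ++ t))| < Real.pi) := by
  obtain ⟨S, q, P0, R0, e1, e2, hi⟩ := T.fork_aux _ hc hu rfl
  have gP : Good (Lc ++ s) := Good_append hc.J hc.good gs fun z hz => hs z hz.2 (hc.im_sub T hz.1)
  have gR : Good (Lu ++ t) := Good_append hu.J hu.good gt fun z hz => ht z hz.2 (hu.im_sub T hz.1)
  have jP : J (Lc ++ s) c0 y := J_append hc.J js
  have jR : J (Lu ++ t) c0 w := J_append hu.J jt
  have hcJ := hc.J
  have huJ := hu.J
  have hcI := hc.im_sub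
  have huI := hu.im_sub
  have hS : c = c0 → S = [] := by
    rintro rfl
    have : Lc = [c] := hc.unique T Tr.Path.root
    rw [this] at e1
    cases S with
    | nil => rfl
    | cons x S => simp at e1
  subst e1 e2
  have jq := J_tail hcJ
  have jq' := J_tail huJ
  have iq := (im_tail (S := S) (u := q) (P0 := P0)).trans hcI
  have iq' := (im_tail (S := S) (u := q) (P0 := R0)).trans huI
  have m1 : imagePL (q :: (P0 ++ s)) = imagePL (q :: P0) ∪ imagePL (c :: s) := im_append jq
  have m2 : imagePL (q :: (R0 ++ t)) = imagePL (q :: R0) ∪ imagePL (u :: t) := im_append jq'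
  simp only [List.append_assoc, List.cons_append] at *
  have := fork gP gR (by simp [s0]) (by simp [t0]) (by
    rw [m1, m2]
    rintro z ⟨hz1 | hz1, hz2 | hz2⟩
    · exact hi ⟨hz1, hz2⟩
    · have : z = u := ht z hz2 (iq hz1)
      subst this
      exact hi ⟨hz1, im_last jq'⟩
    · have : z = c := hs z hz1 (iq' hz2)
      subst this
      exact hi ⟨im_last jq, hz2⟩
    · exact absurd hz2 (Set.disjoint_left.1 hd hz1)) jP jR
  exact ⟨this.1, fun h => this.2 (hS h)⟩

lemma Conf.bound (H : Conf X Y v A B E) :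
    |∑ i, (angSum X (E i) - angSum Y (E i))| < 6 * Real.pi := by
  choose c π s h1 h2 h3 h4 h5 h6 h7 h8 h9 using H.whisk
  obtain ⟨T0, t1, t2, t3⟩ := tree_build c π h1
  have hl : ∀ j, ∃ (u : ℂ) (t : List ℂ), u ∈ T0.img ∧ J (u :: t) u (v j) ∧ Good (u :: t) ∧ t ≠ [] ∧
      imagePL (u :: t) ⊆ imagePL (A j) ∧ ∀ z ∈ imagePL (u :: t), z ∈ T0.img → z = u := by
    intro j
    obtain ⟨u, hu, Q, k1, k2, k3, k4⟩ := last_hit_pl T0.img_closed (H.jA j) (T0.V_img t2)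
    obtain ⟨t, rfl⟩ := J_exists k1
    refine ⟨u, t, hu, k1, k2, ?_, k3, k4⟩
    rintro rfl
    have e : u = v j := (J_single.1 k1).2
    obtain ⟨i, hi⟩ := t3 u hu
    rw [e] at hi
    exact Set.disjoint_left.1 (h3 i j) hi (im_head (H.jB j))
  choose u t l1 l2 l3 l4 l5 l6 using hl
  obtain ⟨T1, a1, a2, a3⟩ := T0.insert_pt (l1 0)
  obtain ⟨T2, b1, b2, b3⟩ := T1.insert_pt (u := u 1) (by rw [a3]; exact l1 1)
  obtain ⟨T, d1, d2, d3⟩ := T2.insert_pt (u := u 2) (by rw [b3, a3]; exact l1 2)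
  have hT : T.img = T0.img := by rw [d3, b3, a3]
  have hcV : ∀ i, c i ∈ T.V := fun i => d1 (b1 (a1 (t1 i)))
  have huV : ∀ j, u j ∈ T.V := by
    intro j
    fin_cases j
    · exact d1 (b1 a2)
    · exact d1 b2
    · exact d2
  choose Lc hLc using fun i => T.exists_path (hcV i)
  choose Lu hLu using fun i => T.exists_path (huV i)
  have hs : ∀ i, ∀ z ∈ imagePL (c i :: s i), z ∈ T.img → z = c i := by
    intro i z hz hzT
    rw [hT] at hzT
    obtain ⟨j, hj⟩ := t3 z hzT
    by_cases hji : j = i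
    · subst hji; exact h9 j z hz hj
    · exact absurd (h2 j hj) (Set.disjoint_left.1 (h8 i j hji) hz)
  have key := fun i j (hij : j ≠ i) => fork_apply T (hLc i) (hLu j) (h4 i) (l3 j) (h5 i) (l2 j) (h6 i) (l4 j)
    (hs i) (by rw [hT]; exact l6 j) ((h8 i j hij).mono_right (l5 j))
  have TB : ∀ i j, Disjoint (imagePL (Lc i)) (imagePL (B j)) := by
    intro i j
    rw [Set.disjoint_left]
    intro z hz
    have := (hLc i).im_sub T hz
    rw [hT] at this
    obtain ⟨k, hk⟩ := t3 z this
    exact Set.disjoint_left.1 (h3 k j) hk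
  have f1 := fun i j => rect (h1 i) (H.jB j) (h3 i j)
  have f2 := fun i j => rect (hLc i).J (H.jB j) (TB i j)
  have f3 := fun i => rect (H.jE i) (J_append (h1 i) (h5 i)) (by
    rw [im_append (h1 i), Set.disjoint_union_right]
    refine ⟨(H.dAE i).symm.mono_right (h2 i), Set.Subset.trans (h7 i) le_rfl |> fun h => ?_⟩
    exact (Set.disjoint_union_right.2 ⟨(H.dAE i).symm, (H.dBE i).symm⟩).mono_right h)
  have f4 := fun z i => angSum_append (O := z) (Q := s i) (h1 i)
  have f5 := fun z i => angSum_append (O := z) (Q := s i) (hLc i).J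
  have k01 := abs_lt.1 ((key 0 1 (by decide)).2 rfl)
  have k02 := abs_lt.1 ((key 0 2 (by decide)).2 rfl)
  have k10 := abs_le.1 ((key 1 0 (by decide)).1)
  have k12 := abs_le.1 ((key 1 2 (by decide)).1)
  have k20 := abs_le.1 ((key 2 0 (by decide)).1)
  have k21 := abs_le.1 ((key 2 1 (by decide)).1)
  have g0 := f3 0
  have g1 := f3 1
  have g2 := f3 2
  have s1 : (1 : Fin 3) + 1 = 2 := rfl
  have s2 : (1 : Fin 3) + 2 = 0 := rfl
  have s3 : (2 : Fin 3) + 1 = 0 := rfl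
  have s4 : (2 : Fin 3) + 2 = 1 := rfl
  rw [zero_add, zero_add] at g0
  rw [s1, s2] at g1
  rw [s3, s4] at g2
  simp only [f4] at g0 g1 g2
  simp only [f5] at k01 k02 k10 k12 k20 k21
  have x01 := f1 0 1
  have x02 := f1 0 2
  have x10 := f1 1 0
  have x12 := f1 1 2
  have x20 := f1 2 0
  have x21 := f1 2 1
  have y01 := f2 0 1
  have y02 := f2 0 2
  have y10 := f2 1 0
  have y12 := f2 1 2
  have y20 := f2 2 0
  have y21 := f2 2 1
  rw [Fin.sum_univ_three, abs_lt]
  clear key f1 f2 f3 f4 f5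
  constructor <;> linarith

lemma Conf.parity (H : Conf X Y v A B E) :
    ∃ k : ℤ, ∑ i, (angSum X (E i) - angSum Y (E i)) = 2 * Real.pi + 4 * Real.pi * k := by
  have vA : ∀ i j, i ≠ j → v j ∉ imagePL (A i) := fun i j h h2 =>
    Set.disjoint_left.1 (H.dAB i j h) h2 (im_head (H.jB j))
  have vB : ∀ i j, i ≠ j → v j ∉ imagePL (B i) := fun i j h h2 =>
    Set.disjoint_left.1 (H.dAB j i h.symm) (im_last (H.jA j)) h2
  have f1 := fun i => rect (H.jE i) (H.jA i) (H.dAE i).symm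
  have f2 := fun i => rect (H.jE i) (H.jB i) (H.dBE i).symm
  have f3 := fun i j (h : i ≠ j) => rect (H.jA i) (H.jB j) (H.dAB i j h)
  have neg : ∀ a b : ℂ, a ≠ b → (Complex.arg (a - b) : Real.Angle) =
      (Complex.arg (b - a) : Real.Angle) + (Real.pi : Real.Angle) := by
    intro a b h
    rw [← neg_sub, Complex.arg_neg_coe_angle (sub_ne_zero.2 h.symm)]
  have vX : ∀ i, v i ≠ X := fun i h => H.XB i (h ▸ im_head (H.jB i))
  have vY : ∀ i, v i ≠ Y := fun i h => H.YA i (h ▸ im_last (H.jA i))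
  have a1 : ∀ i j, i ≠ j → ((angSum (v j) (A i) + angSum (v j) (B i) -
      (angSum Y (A j) + angSum X (B j)) : ℝ) : Real.Angle) = (Real.pi : Real.Angle) := by
    intro i j h
    rw [Real.Angle.coe_sub, Real.Angle.coe_add, Real.Angle.coe_add, angSum_angle (H.jA i) (vA i j h),
      angSum_angle (H.jB i) (vB i j h), angSum_angle (H.jA j) (H.YA j), angSum_angle (H.jB j) (H.XB j),
      neg _ _ (vX j), neg _ _ (vY j), neg _ _ H.hXY]
    abel_nf
  have a := congrArg₂ (· + ·) (congrArg₂ (· + ·) (a1 0 1 (by decide)) (a1 1 2 (by decide))) (a1 2 0 (by decide))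
  simp only [← Real.Angle.coe_add] at a
  rw [Real.Angle.angle_eq_iff_two_pi_dvd_sub] at a
  obtain ⟨k, hk⟩ := a
  have s1 : (1 : Fin 3) + 1 = 2 := rfl
  have s2 : (1 : Fin 3) + 2 = 0 := rfl
  have s3 : (2 : Fin 3) + 1 = 0 := rfl
  have s4 : (2 : Fin 3) + 2 = 1 := rfl
  have p0 := f1 0
  have p1 := f1 1
  have p2 := f1 2
  have q0 := f2 0
  have q1 := f2 1
  have q2 := f2 2
  simp only [zero_add, s1, s2, s3, s4] at p0 p1 p2 q0 q1 q2
  have x01 := f3 0 1 (by decide)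
  have x02 := f3 0 2 (by decide)
  have x10 := f3 1 0 (by decide)
  have x12 := f3 1 2 (by decide)
  have x20 := f3 2 0 (by decide)
  have x21 := f3 2 1 (by decide)
  refine ⟨k + 1, ?_⟩
  rw [Fin.sum_univ_three]
  push_cast
  linarith

lemma Conf.main (H : Conf X Y v A B E) :
    ∑ i, (angSum X (E i) - angSum Y (E i)) = 2 * Real.pi ∨
    ∑ i, (angSum X (E i) - angSum Y (E i)) = - (2 * Real.pi) := by
  obtain ⟨k, hk⟩ := H.parity
  have hb := abs_lt.1 H.bound
  rw [hk] at hb ⊢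
  have hpi := Real.pi_pos
  have k1 : (k : ℝ) < 1 := by
    by_contra hh; push Not at hh; nlinarith
  have k2 : (-2 : ℝ) < k := by
    by_contra hh; push Not at hh; nlinarith
  have k1' : k < 1 := by exact_mod_cast k1
  have k2' : -2 < k := by exact_mod_cast k2
  have : k = 0 ∨ k = -1 := by omega
  rcases this with rfl | rfl
  · left; simp
  · right; push_cast; ring

end

/-- Garaev: Let `f` be an almost embedding of `K₅ − 45` in the plane
(five pairwise distinct points, a polygonal line `p i j` joining `f i` to `f j` for each
edge `{i,j}` with `p j i` the reverse of `p i j`, images of non-adjacent edges disjoint,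
and `f l` not on the image of any edge `{i,j}` with `l ∉ {i,j}`). Then
`w_f(123, 4) − w_f(123, 5) = 1` or `w_f(123, 4) − w_f(123, 5) = −1`, where
`w_f(123, l) := w'(p₁₂, f l) + w'(p₂₃, f l) + w'(p₃₁, f l)`
(vertices `1,…,5` are encoded as `0,…,4 : Fin 5`). -/
theorem winding_difference_pm_one_K5_minus_edge (f : Fin 5 → ℂ)
    (p : Fin 5 → Fin 5 → List ℂ)
    (hinj : Function.Injective f)
    (hne : ∀ i j, IsEdgeK5m45 i j → p i j ≠ [])
    (hjoin : ∀ i j, ∀ h : IsEdgeK5m45 i j,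
      (p i j).headI = f i ∧ (p i j).getLast (hne i j h) = f j)
    (hsym : ∀ i j, p j i = (p i j).reverse)
    (hdisj : ∀ i j k l : Fin 5, IsEdgeK5m45 i j → IsEdgeK5m45 k l →
      i ≠ k → i ≠ l → j ≠ k → j ≠ l →
      Disjoint (imagePL (p i j)) (imagePL (p k l)))
    (hvert : ∀ i j l : Fin 5, IsEdgeK5m45 i j → l ≠ i → l ≠ j →
      f l ∉ imagePL (p i j)) :
    (wp (f 3) (p 0 1) + wp (f 3) (p 1 2) + wp (f 3) (p 2 0)) -
      (wp (f 4) (p 0 1) + wp (f 4) (p 1 2) + wp (f 4) (p 2 0)) = 1 ∨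
    (wp (f 3) (p 0 1) + wp (f 3) (p 1 2) + wp (f 3) (p 2 0)) -
      (wp (f 4) (p 0 1) + wp (f 4) (p 1 2) + wp (f 4) (p 2 0)) = -1 := by
  have hJ : ∀ i j, IsEdgeK5m45 i j → J (p i j) (f i) (f j) := by
    intro i j h
    obtain ⟨h1, h2⟩ := hjoin i j h
    have h3 := hne i j h
    refine ⟨?_, ?_⟩
    · rw [← h1]
      cases hp : p i j with
      | nil => exact absurd hp h3
      | cons a r => simp
    · rw [← h2, List.getLast?_eq_getLast_of_ne_nil]
  have H : Conf (f 3) (f 4) ![f 0, f 1, f 2] ![p 3 0, p 3 1, p 3 2] ![p 0 4, p 1 4, p 2 4]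
      ![p 1 2, p 2 0, p 0 1] := by
    refine ⟨?_, ?_, ?_, ?_, ?_, ?_, ?_, ?_, ?_⟩
    · intro i; fin_cases i <;> exact hJ _ _ (by unfold IsEdgeK5m45; decide)
    · intro i; fin_cases i <;> exact hJ _ _ (by unfold IsEdgeK5m45; decide)
    · intro i; fin_cases i <;> exact hJ _ _ (by unfold IsEdgeK5m45; decide)
    · intro i j hij
      fin_cases i <;> fin_cases j <;> first
        | exact absurd rfl hij
        | exact hdisj _ _ _ _ (by unfold IsEdgeK5m45; decide) (by unfold IsEdgeK5m45; decide)
            (by decide) (by decide) (by decide) (by decide)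
    · intro i
      fin_cases i <;> exact hdisj _ _ _ _ (by unfold IsEdgeK5m45; decide) (by unfold IsEdgeK5m45; decide)
            (by decide) (by decide) (by decide) (by decide)
    · intro i
      fin_cases i <;> exact hdisj _ _ _ _ (by unfold IsEdgeK5m45; decide) (by unfold IsEdgeK5m45; decide)
            (by decide) (by decide) (by decide) (by decide)
    · intro i
      fin_cases i <;> exact hvert _ _ _ (by unfold IsEdgeK5m45; decide) (by decide) (by decide)
    · intro i
      fin_cases i <;> exact hvert _ _ _ (by unfold IsEdgeK5m45; decide) (by decide) (by decide)
    · intro h; exact absurd (hinj h) (by decide)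
  have hm := H.main
  rw [Fin.sum_univ_three] at hm
  simp only [Matrix.cons_val_zero, Matrix.cons_val_one, Matrix.cons_val] at hm
  have hpi : (2 * Real.pi) ≠ 0 := by positivity
  simp only [wp]
  rcases hm with hm | hm
  · left
    field_simp
    linarith
  · right
    field_simp
    linarith
end

section
/- Let f be an almost embedding of K₃,₃ − 33′ (the complete bipartite graph with parts {1,2,3} and {1′,2′,3′} with the edge {3,3′} removed) in the plane, and let C be the 4-cycle 1 1′ 2 2′. Then w_f(C, 3) − w_f(C, 3′) is an odd integer, where w_f(C, v) := w'(p_{11′}, f_v) + w'(p̄_{21′}, f_v) + w'(p_{22′}, f_v) + w'(p̄_{12′}, f_v) and p̄ denotes the reverse of p. -/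
lemma sep_aux {S T : Set ℂ} (hS : Convex ℝ S) (hSc : IsCompact S) (hT : Convex ℝ T)
    (hTc : IsCompact T) (h : Disjoint S T) :
    ∃ u : ℂ, ∀ x ∈ S, ∀ y ∈ T, 0 < (u * (x - y)).re := by
  obtain ⟨F, c, d, h1, h2, h3⟩ := geometric_hahn_banach_compact_closed hT hTc hS hSc.isClosed h.symm
  refine ⟨⟨F 1, - F Complex.I⟩, fun x hx y hy => ?_⟩
  have key : ∀ z : ℂ, ((⟨F 1, - F Complex.I⟩ : ℂ) * z).re = F z := by
    intro z
    have hz : z = z.re • (1 : ℂ) + z.im • Complex.I := by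
      apply Complex.ext <;> simp
    conv_rhs => rw [hz, map_add, map_smul, map_smul]
    simp [Complex.mul_re]
    ring
  rw [key, map_sub]
  have := h1 y hy
  have := h3 x hx
  linarith

lemma arg_div_pos {u a b : ℂ} (ha : 0 < (u * a).re) (hb : 0 < (u * b).re) :
    Complex.arg (b / a) = Complex.arg (u * b) - Complex.arg (u * a) := by
  have ha0 : u * a ≠ 0 := fun h => by simp [h] at ha
  have hb0 : u * b ≠ 0 := fun h => by simp [h] at hb
  have hu : u ≠ 0 := left_ne_zero_of_mul ha0
  have h1 := Complex.abs_arg_lt_pi_div_two_iff.2 (Or.inl ha)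
  have h2 := Complex.abs_arg_lt_pi_div_two_iff.2 (Or.inl hb)
  rw [abs_lt] at h1 h2
  have e : b / a = (u * b) / (u * a) := by rw [mul_div_mul_left _ _ hu]
  rw [e]
  have := (Complex.arg_div_coe_angle hb0 ha0)
  rw [← Real.Angle.coe_sub] at this
  have h3 := congrArg Real.Angle.toReal this
  rw [Complex.arg_coe_angle_toReal_eq_arg, Real.Angle.toReal_coe_eq_self_iff.2] at h3
  · exact h3
  · constructor <;> linarith [h1.1, h1.2, h2.1, h2.2]

lemma seg_seg_s14 {x y z w : ℂ} (h : Disjoint (segment ℝ x y) (segment ℝ z w)) :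
    Complex.arg ((y - z) / (x - z)) + Complex.arg ((w - y) / (z - y))
      - Complex.arg ((y - w) / (x - w)) - Complex.arg ((w - x) / (z - x)) = 0 := by
  obtain ⟨u, hu⟩ := sep_aux (convex_segment x y) (seg_compact x y) (convex_segment z w)
    (seg_compact z w) h
  have hx := left_mem_segment ℝ x y
  have hy := right_mem_segment ℝ x y
  have hz := left_mem_segment ℝ z w
  have hw := right_mem_segment ℝ z w
  have e1 : (w - y) / (z - y) = (y - w) / (y - z) := by
    rw [← neg_sub y w, ← neg_sub y z, neg_div_neg_eq]
  have e2 : (w - x) / (z - x) = (x - w) / (x - z) := by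
    rw [← neg_sub x w, ← neg_sub x z, neg_div_neg_eq]
  rw [e1, e2, arg_div_pos (hu x hx z hz) (hu y hy z hz), arg_div_pos (hu y hy z hz) (hu y hy w hw),
    arg_div_pos (hu x hx w hw) (hu y hy w hw), arg_div_pos (hu x hx z hz) (hu x hx w hw)]
  ring

lemma seg_list_s14 (z w : ℂ) (l : List ℂ) : ∀ a : ℂ,
    Disjoint (imagePL (a :: l)) (segment ℝ z w) →
    angSum z (a :: l) + Complex.arg ((w - (a :: l).getLast (by simp)) /
        (z - (a :: l).getLast (by simp)))
      - angSum w (a :: l) - Complex.arg ((w - a) / (z - a)) = 0 := by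
  induction l with
  | nil => intro a _; simp [angSum]
  | cons b l ih =>
    intro a h
    simp only [imagePL, Set.disjoint_union_left] at h
    have h1 := seg_seg_s14 h.1
    have h2 := ih b h.2
    simp only [angSum, List.getLast_cons_cons] at *
    linarith

lemma list_list_s14 (a : ℂ) (l : List ℂ) (m : List ℂ) : ∀ b : ℂ,
    Disjoint (imagePL (a :: l)) (imagePL (b :: m)) →
    angSum b (a :: l) + angSum ((a :: l).getLast (by simp)) (b :: m)
      - angSum ((b :: m).getLast (by simp)) (a :: l) - angSum a (b :: m) = 0 := by
  induction m with
  | nil => intro b _; simp [angSum]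
  | cons c m ih =>
    intro b h
    have h' : Disjoint (imagePL (a :: l)) (segment ℝ b c) ∧
      Disjoint (imagePL (a :: l)) (imagePL (c :: m)) := by
      rw [← Set.disjoint_union_right]; exact h
    have h1 := seg_list_s14 b c l a h'.1
    have h2 := ih c h'.2
    have e : (b :: c :: m).getLast (by simp) = (c :: m).getLast (by simp) := by
      simp only [List.getLast_cons_cons]
    have e1 : ∀ O, angSum O (b :: c :: m) =
      Complex.arg ((c - O) / (b - O)) + angSum O (c :: m) := fun O => rfl
    rw [e, e1, e1]
    linarith

/-- the pair equation for two disjoint polygonal lines -/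
lemma pair_eq {x y z w : ℂ} {P Q : List ℂ} (hP : P ≠ []) (hQ : Q ≠ [])
    (hPj : P.headI = x ∧ P.getLast hP = y) (hQj : Q.headI = z ∧ Q.getLast hQ = w)
    (h : Disjoint (imagePL P) (imagePL Q)) :
    wp z P + wp y Q - wp w P - wp x Q = 0 := by
  obtain ⟨a, l, rfl⟩ := List.exists_cons_of_ne_nil hP
  obtain ⟨b, m, rfl⟩ := List.exists_cons_of_ne_nil hQ
  have := list_list_s14 a l m b h
  simp only [List.headI_cons] at hPj hQj
  obtain ⟨rfl, rfl⟩ := hPj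
  obtain ⟨rfl, rfl⟩ := hQj
  unfold wp
  rw [← add_div, ← sub_div, ← sub_div, this, zero_div]

lemma arg_rev {O a b : ℂ} (h : O ∉ segment ℝ a b) :
    Complex.arg ((a - O) / (b - O)) = - Complex.arg ((b - O) / (a - O)) := by
  obtain ⟨u, hu⟩ := sep_aux (convex_segment a b) (seg_compact a b) (convex_singleton O)
    isCompact_singleton (Set.disjoint_singleton_right.2 h)
  have h1 := hu a (left_mem_segment ℝ a b) O rfl
  have h2 := hu b (right_mem_segment ℝ a b) O rfl
  rw [arg_div_pos h1 h2, arg_div_pos h2 h1]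
  ring

lemma angSum_snoc (O : ℂ) (l : List ℂ) (a b : ℂ) :
    angSum O (l ++ [a, b]) = angSum O (l ++ [a]) + Complex.arg ((b - O) / (a - O)) := by
  induction l with
  | nil => simp [angSum]
  | cons c l ih =>
    cases l with
    | nil => simp [angSum]
    | cons d l =>
      simp only [List.cons_append, angSum] at *
      rw [ih]; ring

lemma angSum_reverse (O : ℂ) (l : List ℂ) (h : O ∉ imagePL l) :
    angSum O l.reverse = - angSum O l := by
  induction l with
  | nil => simp [angSum]
  | cons a l ih =>
    cases l with
    | nil => simp [angSum]
    | cons b l =>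
      simp only [imagePL, Set.mem_union, not_or] at h
      have := ih h.2
      simp only [List.reverse_cons, List.append_assoc, List.cons_append, List.nil_append] at *
      rw [angSum_snoc, this, arg_rev h.1]
      simp only [angSum]
      ring

lemma wp_reverse {O : ℂ} {l : List ℂ} (h : O ∉ imagePL l) :
    wp O l.reverse = - wp O l := by
  unfold wp
  rw [angSum_reverse O l h, neg_div]

/-- `t` turns is a direction of `z` -/
def IsDir (z : ℂ) (t : ℝ) : Prop := (‖z‖ : ℂ) * Complex.exp ((2 * Real.pi * t : ℝ) * Complex.I) = z

lemma exists_isDir (z : ℂ) : ∃ t, IsDir z t := by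
  refine ⟨Complex.arg z / (2 * Real.pi), ?_⟩
  unfold IsDir
  rw [mul_div_cancel₀ _ (by positivity)]
  exact Complex.norm_mul_exp_arg_mul_I z

lemma IsDir.neg {z : ℂ} {t : ℝ} (h : IsDir z t) : IsDir (-z) (t + 1 / 2) := by
  unfold IsDir at *
  have : (((2 * Real.pi * (t + 1 / 2) : ℝ) : ℂ) * Complex.I) =
      ((2 * Real.pi * t : ℝ) : ℂ) * Complex.I + Real.pi * Complex.I := by
    push_cast; ring
  rw [this, Complex.exp_add, Complex.exp_pi_mul_I, norm_neg]
  linear_combination -h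

lemma IsDir.unique {z : ℂ} {s t : ℝ} (hz : z ≠ 0) (h : IsDir z s) (h' : IsDir z t) :
    ∃ n : ℤ, s = t + n := by
  unfold IsDir at *
  have hn : (‖z‖ : ℂ) ≠ 0 := by simpa using hz
  have := mul_left_cancel₀ hn (h.trans h'.symm)
  obtain ⟨n, hn⟩ := Complex.exp_eq_exp_iff_exists_int.1 this
  refine ⟨n, ?_⟩
  have h2 : (2 * Real.pi * Complex.I : ℂ) ≠ 0 := Complex.two_pi_I_ne_zero
  have h3 : (2 * Real.pi * Complex.I : ℂ) * (s : ℂ) = (2 * Real.pi * Complex.I) * ((t : ℂ) + n) := by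
    push_cast at hn
    linear_combination hn
  exact_mod_cast mul_left_cancel₀ h2 h3

lemma IsDir.step {z w : ℂ} {s : ℝ} (hz : z ≠ 0) (h : IsDir z s) :
    IsDir w (s + Complex.arg (w / z) / (2 * Real.pi)) := by
  unfold IsDir at *
  have e : (((2 * Real.pi * (s + Complex.arg (w / z) / (2 * Real.pi)) : ℝ) : ℂ) * Complex.I) =
      ((2 * Real.pi * s : ℝ) : ℂ) * Complex.I + (Complex.arg (w / z)) * Complex.I := by
    have : 2 * Real.pi * (s + Complex.arg (w / z) / (2 * Real.pi)) =
      2 * Real.pi * s + Complex.arg (w / z) := by field_simp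
    rw [this]; push_cast; ring
  have h2 := Complex.norm_mul_exp_arg_mul_I (w / z)
  have hn : (‖z‖ : ℂ) ≠ 0 := by simpa using hz
  rw [e, Complex.exp_add]
  rw [norm_div] at h2
  push_cast at h2
  have h3 : (‖w‖ : ℂ) = ‖z‖ * (‖w‖ / ‖z‖) := by field_simp
  calc _ = ((‖z‖ : ℂ) * Complex.exp (((2 * Real.pi * s : ℝ) : ℂ) * Complex.I)) *
        ((‖w‖ / ‖z‖ : ℂ) * Complex.exp ((Complex.arg (w / z)) * Complex.I)) := by
        conv_lhs => rw [h3]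
        ring
    _ = z * (w / z) := by rw [h, h2]
    _ = w := by field_simp

lemma isDir_wp_cons (O : ℂ) (l : List ℂ) : ∀ (a : ℂ) (s : ℝ), O ∉ imagePL (a :: l) →
    IsDir (a - O) s → IsDir ((a :: l).getLast (by simp) - O) (s + wp O (a :: l)) := by
  induction l with
  | nil => intro a s _ h; simpa [wp, angSum] using h
  | cons b l ih =>
    intro a s hO h
    have ha : a - O ≠ 0 := by
      intro h0
      rw [sub_eq_zero] at h0
      exact hO (h0 ▸ head_mem_imagePL a _)
    simp only [imagePL, Set.mem_union, not_or] at hO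
    have := ih b _ hO.2 (h.step (w := b - O) ha)
    simp only [List.getLast_cons_cons, wp, angSum] at *
    rw [add_div, ← add_assoc]
    exact this

lemma wp_int {O x y : ℂ} {P : List ℂ} (hP : P ≠ [])
    (hPj : P.headI = x ∧ P.getLast hP = y) (hO : O ∉ imagePL P) (hy : y ≠ O) {s t : ℝ}
    (hs : IsDir (x - O) s) (ht : IsDir (y - O) t) : ∃ n : ℤ, wp O P = t - s + n := by
  obtain ⟨a, l, rfl⟩ := List.exists_cons_of_ne_nil hP
  simp only [List.headI_cons] at hPj
  obtain ⟨rfl, rfl⟩ := hPj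
  obtain ⟨n, hn⟩ := (isDir_wp_cons O l a s hO hs).unique (sub_ne_zero.2 hy) ht
  exact ⟨n, by linarith⟩

lemma exists_dirs (f : Fin 3 → ℂ) : ∃ α : Fin 3 → Fin 3 → ℝ,
    (∀ i k, IsDir (f i - f k) (α i k)) ∧ ∀ i k, i < k → α k i = α i k + 1 / 2 := by
  choose a ha using fun i k => exists_isDir (f i - f k)
  refine ⟨fun i k => if k < i then a k i + 1 / 2 else a i k, fun i k => ?_, fun i k h => ?_⟩
  · dsimp only
    split_ifs with h
    · have := (ha k i).neg
      rwa [neg_sub] at this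
    · exact ha i k
  · simp [h, h.le.not_gt]

/-- Let `f` be an almost embedding of `K₃,₃ − 33′` in the plane, and let
`C` be the 4-cycle `1 1′ 2 2′`. Then `w_f(C, 3) − w_f(C, 3′)` is an odd integer, where
`w_f(C, v) := w'(p₁₁′, f_v) + w'(p̄₂₁′, f_v) + w'(p₂₂′, f_v) + w'(p̄₁₂′, f_v)`.
Here the parts `{1,2,3}` and `{1′,2′,3′}` are encoded by `f g : Fin 3 → ℂ`, the
polygonal line `p i j` joins `f i` to `g j` for each edge `{i,j′} ≠ {3,3′}` (i.e.
`¬(i = 2 ∧ j = 2)`), the six points are pairwise distinct, images of non-adjacent edges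
(edges sharing no vertex) are disjoint, and no vertex lies on the image of an edge not
containing it. -/
theorem winding_difference_odd_K33_minus_edge (f g : Fin 3 → ℂ)
    (p : Fin 3 → Fin 3 → List ℂ)
    (hinjf : Function.Injective f) (hinjg : Function.Injective g)
    (hfg : ∀ i j, f i ≠ g j)
    (hne : ∀ i j, ¬(i = 2 ∧ j = 2) → p i j ≠ [])
    (hjoin : ∀ i j, ∀ h : ¬(i = 2 ∧ j = 2),
      (p i j).headI = f i ∧ (p i j).getLast (hne i j h) = g j)
    (hdisj : ∀ i j k l : Fin 3, ¬(i = 2 ∧ j = 2) → ¬(k = 2 ∧ l = 2) →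
      i ≠ k → j ≠ l → Disjoint (imagePL (p i j)) (imagePL (p k l)))
    (hvf : ∀ v i j : Fin 3, ¬(i = 2 ∧ j = 2) → v ≠ i → f v ∉ imagePL (p i j))
    (hvg : ∀ v i j : Fin 3, ¬(i = 2 ∧ j = 2) → v ≠ j → g v ∉ imagePL (p i j)) :
    ∃ n : ℤ, Odd n ∧
      (wp (f 2) (p 0 0) + wp (f 2) (p 1 0).reverse +
        wp (f 2) (p 1 1) + wp (f 2) (p 0 1).reverse) -
      (wp (g 2) (p 0 0) + wp (g 2) (p 1 0).reverse +
        wp (g 2) (p 1 1) + wp (g 2) (p 0 1).reverse) = n := by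
  obtain ⟨α, hα, hα'⟩ := exists_dirs f
  obtain ⟨β, hβ, hβ'⟩ := exists_dirs g
  choose γ hγ using fun j k => exists_isDir (g j - f k)
  have hγ' : ∀ i l, IsDir (f i - g l) (γ l i + 1 / 2) := by
    intro i l
    have := (hγ l i).neg
    rwa [neg_sub] at this
  have hP : ∀ i j k, ∃ n : ℤ, ¬(i = 2 ∧ j = 2) → k ≠ i →
      wp (f k) (p i j) = γ j k - α i k + n := by
    intro i j k
    by_cases h : ¬(i = 2 ∧ j = 2) ∧ k ≠ i
    · obtain ⟨n, hn⟩ := wp_int (hne i j h.1) (hjoin i j h.1) (hvf k i j h.1 h.2)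
        (hfg k j).symm (hα i k) (hγ j k)
      exact ⟨n, fun _ _ => hn⟩
    · exact ⟨0, fun h1 h2 => absurd ⟨h1, h2⟩ h⟩
  have hQ : ∀ i j l, ∃ n : ℤ, ¬(i = 2 ∧ j = 2) → l ≠ j →
      wp (g l) (p i j) = β j l - (γ l i + 1 / 2) + n := by
    intro i j l
    by_cases h : ¬(i = 2 ∧ j = 2) ∧ l ≠ j
    · obtain ⟨n, hn⟩ := wp_int (hne i j h.1) (hjoin i j h.1) (hvg l i j h.1 h.2)
        (fun e => h.2 (hinjg e).symm) (hγ' i l) (hβ j l)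
      exact ⟨n, fun _ _ => hn⟩
    · exact ⟨0, fun h1 h2 => absurd ⟨h1, h2⟩ h⟩
  choose P hP using hP
  choose Q hQ using hQ
  have eqA : ∀ i j k l : Fin 3, i < k → j < l → ¬(i = 2 ∧ j = 2) → ¬(k = 2 ∧ l = 2) →
      P i j k + Q k l j - Q i j l - P k l i = -1 := by
    intro i j k l hik hjl h1 h2
    have h := pair_eq (hne i j h1) (hne k l h2) (hjoin i j h1) (hjoin k l h2)
      (hdisj i j k l h1 h2 hik.ne hjl.ne)
    rw [hP i j k h1 hik.ne', hQ k l j h2 hjl.ne, hQ i j l h1 hjl.ne', hP k l i h2 hik.ne,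
      hα' i k hik, hβ' j l hjl] at h
    have : ((P i j k + Q k l j - Q i j l - P k l i : ℤ) : ℝ) = ((-1 : ℤ) : ℝ) := by
      push_cast; linarith
    exact_mod_cast this
  have eqB : ∀ i j k l : Fin 3, i < k → l < j → ¬(i = 2 ∧ j = 2) → ¬(k = 2 ∧ l = 2) →
      P i j k + Q k l j - Q i j l - P k l i = 0 := by
    intro i j k l hik hjl h1 h2
    have h := pair_eq (hne i j h1) (hne k l h2) (hjoin i j h1) (hjoin k l h2)
      (hdisj i j k l h1 h2 hik.ne hjl.ne')
    rw [hP i j k h1 hik.ne', hQ k l j h2 hjl.ne', hQ i j l h1 hjl.ne, hP k l i h2 hik.ne,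
      hα' i k hik, hβ' l j hjl] at h
    have : ((P i j k + Q k l j - Q i j l - P k l i : ℤ) : ℝ) = ((0 : ℤ) : ℝ) := by
      push_cast; linarith
    exact_mod_cast this
  refine ⟨(P 0 0 2 - P 1 0 2 + P 1 1 2 - P 0 1 2) - (Q 0 0 2 - Q 1 0 2 + Q 1 1 2 - Q 0 1 2),
    ?_, ?_⟩
  · have a1 := eqA 0 0 1 1 (by decide) (by decide) (by decide) (by decide)
    have a2 := eqA 0 0 1 2 (by decide) (by decide) (by decide) (by decide)
    have a3 := eqA 0 1 1 2 (by decide) (by decide) (by decide) (by decide)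
    have a4 := eqA 0 0 2 1 (by decide) (by decide) (by decide) (by decide)
    have a5 := eqA 1 0 2 1 (by decide) (by decide) (by decide) (by decide)
    have b1 := eqB 0 1 1 0 (by decide) (by decide) (by decide) (by decide)
    have b2 := eqB 0 2 1 0 (by decide) (by decide) (by decide) (by decide)
    have b3 := eqB 0 2 1 1 (by decide) (by decide) (by decide) (by decide)
    have b4 := eqB 0 1 2 0 (by decide) (by decide) (by decide) (by decide)
    have b5 := eqB 0 2 2 0 (by decide) (by decide) (by decide) (by decide)
    have b6 := eqB 0 2 2 1 (by decide) (by decide) (by decide) (by decide)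
    have b7 := eqB 1 1 2 0 (by decide) (by decide) (by decide) (by decide)
    have b8 := eqB 1 2 2 0 (by decide) (by decide) (by decide) (by decide)
    have b9 := eqB 1 2 2 1 (by decide) (by decide) (by decide) (by decide)
    rw [Int.odd_iff]
    omega
  · rw [wp_reverse (hvf 2 1 0 (by decide) (by decide)),
      wp_reverse (hvf 2 0 1 (by decide) (by decide)),
      wp_reverse (hvg 2 1 0 (by decide) (by decide)),
      wp_reverse (hvg 2 0 1 (by decide) (by decide)),
      hP 0 0 2 (by decide) (by decide), hP 1 0 2 (by decide) (by decide),
      hP 1 1 2 (by decide) (by decide), hP 0 1 2 (by decide) (by decide),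
      hQ 0 0 2 (by decide) (by decide), hQ 1 0 2 (by decide) (by decide),
      hQ 1 1 2 (by decide) (by decide), hQ 0 1 2 (by decide) (by decide)]
    push_cast
    ring
end
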